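/- arXiv:2412.01574 — 12 statements merged into one kernel-verified Lean document; each statement's English description precedes it below -/
import Mathlib

section
/- Let μ be a compactly supported Borel probability measure on ℝ with moments m_k := ∫ λ^k dμ(λ), and let (Q_n)_{n≥0} and (q_n)_{n≥0} be defined from μ as in the context. Then for every integer k ≥ 1, m_k = Σ_{π ∈ NC(k)} ∏_{B ∈ π} q_{|B|}; that is, the numbers q_n = ∫ λ·Q_{n−1}(λ) dμ(λ) satisfy the moment–free-cumulant relations of μ, so they are the free cumulants of μ. -/
open MeasureTheory

/-- A finite partition of `{0,…,k-1}` (i.e. of `Fin k`) is non-crossing if there are no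
`a < b < c < d` with `a, c` in one block and `b, d` in a different block. -/
def IsNonCrossing {k : ℕ} (π : Finpartition (Finset.univ : Finset (Fin k))) : Prop :=
  ∀ a b c d : Fin k, a < b → b < c → c < d →
    ∀ B₁ ∈ π.parts, ∀ B₂ ∈ π.parts, a ∈ B₁ → c ∈ B₁ → b ∈ B₂ → d ∈ B₂ → B₁ = B₂

namespace FreeCum

open Classical in
theorem exists_upper {α : Type*} [LinearOrder α] (U : Finset α) (i : ℕ) (hi : i ≤ U.card) :
    ∃ B ⊆ U, (∀ x ∈ B, ∀ y ∈ U, x < y → y ∈ B) ∧ B.card = i := by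
  induction i with
  | zero => exact ⟨∅, by simp, by simp, rfl⟩
  | succ i ih =>
    obtain ⟨B, hB, hup, hc⟩ := ih (by omega)
    have hne : (U \ B).Nonempty := by
      rw [← Finset.card_pos, Finset.card_sdiff_of_subset hB]; omega
    obtain ⟨m, hm, hmax⟩ := Finset.exists_max_image (U \ B) id hne
    simp only [Finset.mem_sdiff, id] at hm hmax
    refine ⟨insert m B, ?_, ?_, ?_⟩
    · intro x hx; rw [Finset.mem_insert] at hx
      rcases hx with rfl | hx
      · exact hm.1
      · exact hB hx
    · intro x hx y hy hxy
      rw [Finset.mem_insert] at hx ⊢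
      by_contra hcon
      push Not at hcon
      rcases hx with rfl | hx
      · exact absurd (hmax y ⟨hy, hcon.2⟩) (not_le.2 hxy)
      · exact hcon.2 (hup x hx y hy hxy)
    · rw [Finset.card_insert_of_notMem hm.2, hc]

theorem upper_inj {α : Type*} [LinearOrder α] (U B C : Finset α)
    (hB : B ⊆ U) (hBu : ∀ x ∈ B, ∀ y ∈ U, x < y → y ∈ B)
    (hC : C ⊆ U) (hCu : ∀ x ∈ C, ∀ y ∈ U, x < y → y ∈ C) (h : B.card = C.card) : B = C := by
  have : B ⊆ C ∨ C ⊆ B := by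
    by_contra hcon
    push Not at hcon
    obtain ⟨h1, h2⟩ := hcon
    obtain ⟨x, hx, hx'⟩ := Finset.not_subset.1 h1
    obtain ⟨y, hy, hy'⟩ := Finset.not_subset.1 h2
    rcases lt_trichotomy x y with hxy | rfl | hxy
    · exact hy' (hBu x hx y (hC hy) hxy)
    · exact hx' hy
    · exact hx' (hCu y hy x (hB hx) hxy)
  rcases this with h1 | h1
  · exact Finset.eq_of_subset_of_card_le h1 h.ge
  · exact (Finset.eq_of_subset_of_card_le h1 h.le).symm

open Classical in
/-- upper subsets of `U` -/
noncomputable def ups {α : Type*} [LinearOrder α] (U : Finset α) : Finset (Finset α) :=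
  U.powerset.filter (fun B => ∀ x ∈ B, ∀ y ∈ U, x < y → y ∈ B)

theorem mem_ups {α : Type*} [LinearOrder α] {U B : Finset α} :
    B ∈ ups U ↔ B ⊆ U ∧ ∀ x ∈ B, ∀ y ∈ U, x < y → y ∈ B := by
  simp [ups]

theorem sum_ups {α M : Type*} [LinearOrder α] [AddCommMonoid M] (U : Finset α) (f : ℕ → M) :
    ∑ B ∈ ups U, f B.card = ∑ i ∈ Finset.range (U.card + 1), f i := by
  refine Finset.sum_bij (fun B _ => B.card) ?_ ?_ ?_ ?_
  · intro B hB
    have := Finset.card_le_card (mem_ups.1 hB).1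
    simp; omega
  · intro B hB C hC h
    rw [mem_ups] at hB hC
    exact upper_inj U B C hB.1 hB.2 hC.1 hC.2 h
  · intro i hi
    obtain ⟨B, h1, h2, h3⟩ := exists_upper U i (by simp at hi; omega)
    exact ⟨B, mem_ups.2 ⟨h1, h2⟩, h3⟩
  · intros; rfl

/-- partial non-crossing partitions of the points below `k` -/
structure Valid {N : ℕ} (k : ℕ) (P : Finset (Finset (Fin N))) : Prop where
  ne : ∀ B ∈ P, B.Nonempty
  lt : ∀ B ∈ P, ∀ x ∈ B, x.val < k
  dj : ∀ B ∈ P, ∀ C ∈ P, ∀ x, x ∈ B → x ∈ C → B = C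
  nc : ∀ a b c d : Fin N, a < b → b < c → c < d →
    ∀ B₁ ∈ P, ∀ B₂ ∈ P, a ∈ B₁ → c ∈ B₁ → b ∈ B₂ → d ∈ B₂ → B₁ = B₂
  op : ∀ B ∈ P, ∀ a u c : Fin N, a < u → u < c → a ∈ B → c ∈ B → ∃ C ∈ P, u ∈ C

open Classical in
/-- open points -/
noncomputable def Op {N : ℕ} (k : ℕ) (P : Finset (Finset (Fin N))) : Finset (Fin N) :=
  Finset.univ.filter (fun x => x.val < k ∧ ∀ B ∈ P, x ∉ B)

theorem mem_Op {N k : ℕ} {P : Finset (Finset (Fin N))} {x : Fin N} :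
    x ∈ Op k P ↔ x.val < k ∧ ∀ B ∈ P, x ∉ B := by simp [Op]

open Classical in
/-- all valid ones -/
noncomputable def S (N k : ℕ) : Finset (Finset (Finset (Fin N))) :=
  Finset.univ.filter (Valid k)

theorem mem_S {N k : ℕ} {P : Finset (Finset (Fin N))} : P ∈ S N k ↔ Valid k P := by simp [S]

open Classical in
/-- add a block, ignoring the empty block -/
noncomputable def ins {N : ℕ} (B : Finset (Fin N)) (P : Finset (Finset (Fin N))) :
    Finset (Finset (Fin N)) := if B = ∅ then P else insert B P

theorem mem_ins {N : ℕ} {B C : Finset (Fin N)} {P : Finset (Finset (Fin N))} :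
    C ∈ ins B P ↔ C ∈ P ∨ (C = B ∧ B ≠ ∅) := by
  unfold ins; split_ifs with h <;> simp [h]; tauto

theorem Op_succ_card {N : ℕ} (k : Fin N) {P : Finset (Finset (Fin N))} (h : Valid k.val P) :
    (Op (k.val + 1) P).card = (Op k.val P).card + 1 := by
  have : Op (k.val+1) P = insert k (Op k.val P) := by
    ext x
    rw [Finset.mem_insert, mem_Op, mem_Op]
    constructor
    · rintro ⟨h1, h2⟩
      by_cases hx : x = k
      · exact Or.inl hx
      · right; refine ⟨?_, h2⟩
        have : x.val ≠ k.val := fun hh => hx (Fin.ext hh)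
        omega
    · rintro (rfl | ⟨h1, h2⟩)
      · exact ⟨by omega, fun B hB hx => absurd (h.lt B hB _ hx) (lt_irrefl _)⟩
      · exact ⟨by omega, h2⟩
  rw [this, Finset.card_insert_of_notMem]
  simp [mem_Op]

theorem ups_mem_top {N : ℕ} (k : Fin N) {P : Finset (Finset (Fin N))} (h : Valid k.val P)
    {B : Finset (Fin N)} (hB : B ∈ ups (Op (k.val + 1) P)) (hne : B ≠ ∅) : k ∈ B := by
  rw [mem_ups] at hB
  obtain ⟨x, hx⟩ := Finset.nonempty_iff_ne_empty.2 hne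
  have hxl := (mem_Op.1 (hB.1 hx)).1
  by_cases hxk : x = k
  · exact hxk ▸ hx
  · have : x.val ≠ k.val := fun hh => hxk (Fin.ext hh)
    refine hB.2 x hx k (mem_Op.2 ⟨by omega, fun C hC hk => absurd (h.lt C hC _ hk) (lt_irrefl _)⟩) ?_
    rw [Fin.lt_def]; omega

theorem valid_ins {N : ℕ} (k : Fin N) {P : Finset (Finset (Fin N))} (h : Valid k.val P)
    {B : Finset (Fin N)} (hB : B ∈ ups (Op (k.val + 1) P)) : Valid (k.val + 1) (ins B P) := by
  rw [mem_ups] at hB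
  have hBo : ∀ x ∈ B, ∀ C ∈ P, x ∉ C := fun x hx => (mem_Op.1 (hB.1 hx)).2
  have hBl : ∀ x ∈ B, x.val < k.val + 1 := fun x hx => (mem_Op.1 (hB.1 hx)).1
  constructor
  · intro C hC
    rcases mem_ins.1 hC with hC | ⟨rfl, hC⟩
    · exact h.ne C hC
    · exact Finset.nonempty_iff_ne_empty.2 hC
  · intro C hC x hx
    rcases mem_ins.1 hC with hC | ⟨rfl, hC⟩
    · have := h.lt C hC x hx; omega
    · exact hBl x hx
  · intro C hC D hD x hxC hxD
    replace hC := mem_ins.1 hC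
    replace hD := mem_ins.1 hD
    rcases hC with hC | ⟨rfl, hC⟩ <;> rcases hD with hD | ⟨rfl, hD⟩
    · exact h.dj C hC D hD x hxC hxD
    · exact absurd hxC (hBo x hxD C hC)
    · exact absurd hxD (hBo x hxC D hD)
    · rfl
  · intro a b c d hab hbc hcd C hC D hD ha hc hb hd
    replace hC := mem_ins.1 hC
    replace hD := mem_ins.1 hD
    rcases hC with hC | ⟨rfl, hC⟩ <;> rcases hD with hD | ⟨rfl, hD⟩
    · exact h.nc a b c d hab hbc hcd C hC D hD ha hc hb hd
    · obtain ⟨E, hE, hbE⟩ := h.op C hC a b c hab hbc ha hc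
      exact absurd hbE (hBo b hb E hE)
    · obtain ⟨E, hE, hbE⟩ := h.op D hD b c d hbc hcd hb hd
      exact absurd hbE (hBo c hc E hE)
    · rfl
  · intro C hC a u c hau huc ha hc
    rcases mem_ins.1 hC with hC | ⟨rfl, hC'⟩
    · obtain ⟨E, hE, hbE⟩ := h.op C hC a u c hau huc ha hc
      exact ⟨E, mem_ins.2 (Or.inl hE), hbE⟩
    · by_cases hu : ∃ E ∈ P, u ∈ E
      · obtain ⟨E, hE, hbE⟩ := hu
        exact ⟨E, mem_ins.2 (Or.inl hE), hbE⟩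
      · push Not at hu
        refine ⟨C, hC, hB.2 a ha u (mem_Op.2 ⟨?_, hu⟩) hau⟩
        have := hBl c hc
        have : u.val < c.val := huc
        omega

open Classical in
theorem surj_ins {N : ℕ} (k : Fin N) {P : Finset (Finset (Fin N))} (h : Valid (k.val + 1) P) :
    ∃ P', Valid k.val P' ∧ ∃ B ∈ ups (Op (k.val + 1) P'), ins B P' = P := by
  by_cases hk : ∃ B ∈ P, k ∈ B
  · obtain ⟨B, hBP, hkB⟩ := hk
    have hBl := h.lt B hBP
    refine ⟨P.erase B, ⟨?_, ?_, ?_, ?_, ?_⟩, B, mem_ups.2 ⟨?_, ?_⟩, ?_⟩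
    · intro C hC; exact h.ne C (Finset.mem_of_mem_erase hC)
    · intro C hC x hx
      have h1 := h.lt C (Finset.mem_of_mem_erase hC) x hx
      have : x.val ≠ k.val := fun hh =>
        Finset.ne_of_mem_erase hC (h.dj C (Finset.mem_of_mem_erase hC) B hBP k
          (by rw [← Fin.ext hh]; exact hx) hkB)
      omega
    · intro C hC D hD
      exact h.dj C (Finset.mem_of_mem_erase hC) D (Finset.mem_of_mem_erase hD)
    · intro a b c d hab hbc hcd C hC D hD
      exact h.nc a b c d hab hbc hcd C (Finset.mem_of_mem_erase hC) D (Finset.mem_of_mem_erase hD)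
    · intro C hC a u c hau huc ha hc
      have hC' := Finset.mem_of_mem_erase hC
      obtain ⟨E, hE, huE⟩ := h.op C hC' a u c hau huc ha hc
      refine ⟨E, Finset.mem_erase.2 ⟨?_, hE⟩, huE⟩
      rintro rfl
      have hcl := h.lt C hC' c hc
      have hck : c ≠ k := by
        rintro rfl
        exact Finset.ne_of_mem_erase hC (h.dj C hC' E hE c hc hkB)
      have hck : c < k := by
        have : c.val ≠ k.val := fun hh => hck (Fin.ext hh)
        rw [Fin.lt_def]; omega
      exact Finset.ne_of_mem_erase hC (h.nc a u c k hau huc hck C hC' E hE ha hc huE hkB)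
    · intro x hx
      refine mem_Op.2 ⟨hBl x hx, fun C hC hxC => ?_⟩
      exact Finset.ne_of_mem_erase hC (h.dj C (Finset.mem_of_mem_erase hC) B hBP x hxC hx)
    · intro x hx y hy hxy
      rw [mem_Op] at hy
      by_cases hyk : y = k
      · exact hyk ▸ hkB
      have hyk : y < k := by
        have : y.val ≠ k.val := fun hh => hyk (Fin.ext hh)
        rw [Fin.lt_def]; omega
      obtain ⟨E, hE, hyE⟩ := h.op B hBP x y k hxy hyk hx hkB
      by_cases hEB : E = B
      · exact hEB ▸ hyE
      · exact absurd hyE (hy.2 E (Finset.mem_erase.2 ⟨hEB, hE⟩))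
    · unfold ins
      rw [if_neg (Finset.nonempty_iff_ne_empty.1 ⟨k, hkB⟩), Finset.insert_erase hBP]
  · push Not at hk
    refine ⟨P, ⟨h.ne, ?_, h.dj, h.nc, h.op⟩, ∅, mem_ups.2 (by simp), by simp [ins]⟩
    intro B hB x hx
    have h1 := h.lt B hB x hx
    have : x.val ≠ k.val := fun hh => hk B hB (by rw [← Fin.ext hh]; exact hx)
    omega

theorem inj_ins {N : ℕ} (k : Fin N) {P P' : Finset (Finset (Fin N))} (h : Valid k.val P)
    (h' : Valid k.val P') {B B' : Finset (Fin N)} (hB : B ∈ ups (Op (k.val + 1) P))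
    (hB' : B' ∈ ups (Op (k.val + 1) P')) (he : ins B P = ins B' P') : P = P' ∧ B = B' := by
  have key : ∀ {P P' : Finset (Finset (Fin N))}, Valid k.val P → Valid k.val P' →
      ∀ {B B' : Finset (Fin N)}, B ∈ ups (Op (k.val + 1) P) →
      B' ∈ ups (Op (k.val + 1) P') → ins B P = ins B' P' → P ⊆ P' ∧ (B ≠ ∅ → B = B') := by
    intro P P' h h' B B' hB hB' he
    constructor
    · intro C hC
      have : C ∈ ins B' P' := he ▸ mem_ins.2 (Or.inl hC)
      rcases mem_ins.1 this with hh | ⟨rfl, hne⟩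
      · exact hh
      · exact absurd (h.lt C hC k (ups_mem_top k h' hB' hne)) (lt_irrefl _)
    · intro hne
      have : B ∈ ins B' P' := he ▸ mem_ins.2 (Or.inr ⟨rfl, hne⟩)
      rcases mem_ins.1 this with hh | ⟨rfl, hne⟩
      · exact absurd (h'.lt B hh k (ups_mem_top k h hB hne)) (lt_irrefl _)
      · rfl
  have k1 := key h h' hB hB' he
  have k2 := key h' h hB' hB he.symm
  refine ⟨Finset.Subset.antisymm k1.1 k2.1, ?_⟩
  by_cases hb : B = ∅
  · by_cases hb' : B' = ∅
    · rw [hb, hb']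
    · exact (k2.2 hb').symm
  · exact k1.2 hb

theorem Op_ins {N : ℕ} (k : Fin N) {P : Finset (Finset (Fin N))}
    {B : Finset (Fin N)} (hB : B ∈ ups (Op (k.val + 1) P)) :
    (Op (k.val + 1) (ins B P)).card = (Op (k.val + 1) P).card - B.card := by
  rw [← Finset.card_sdiff_of_subset (mem_ups.1 hB).1]
  congr 1
  ext x
  simp only [mem_Op, Finset.mem_sdiff, mem_ins]
  constructor
  · rintro ⟨h1, h2⟩
    exact ⟨⟨h1, fun C hC => h2 C (Or.inl hC)⟩,
      fun hx => h2 B (Or.inr ⟨rfl, Finset.nonempty_iff_ne_empty.1 ⟨x, hx⟩⟩) hx⟩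
  · rintro ⟨⟨h1, h2⟩, h3⟩
    refine ⟨h1, ?_⟩
    rintro C (hC | ⟨rfl, _⟩)
    · exact h2 C hC
    · exact h3

theorem prod_ins {N : ℕ} (k : Fin N) {P : Finset (Finset (Fin N))} (h : Valid k.val P)
    {B : Finset (Fin N)} (hB : B ∈ ups (Op (k.val + 1) P)) (q : ℕ → ℝ) (hq0 : q 0 = 1) :
    ∏ C ∈ ins B P, q C.card = (∏ C ∈ P, q C.card) * q B.card := by
  by_cases hb : B = ∅
  · subst hb; simp [ins, hq0]
  · unfold ins
    rw [if_neg hb, Finset.prod_insert, mul_comm]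
    intro hBP
    exact absurd (h.lt B hBP k (ups_mem_top k h hB hb)) (lt_irrefl _)

theorem pow_expand (Q : ℕ → Polynomial ℝ) (q : ℕ → ℝ) (hQ0 : Q 0 = 1) (hq0 : q 0 = 1)
    (hX : ∀ n, Polynomial.X * Q n =
      ∑ i ∈ Finset.range (n + 2), Polynomial.C (q i) * Q (n + 1 - i))
    (N k : ℕ) (hk : k ≤ N) :
    (Polynomial.X : Polynomial ℝ) ^ k =
      ∑ P ∈ S N k, Polynomial.C (∏ B ∈ P, q B.card) * Q (Op k P).card := by
  induction k with
  | zero =>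
    have : S N 0 = {∅} := by
      ext P
      rw [mem_S, Finset.mem_singleton]
      constructor
      · intro h
        rw [Finset.eq_empty_iff_forall_notMem]
        intro B hB
        obtain ⟨x, hx⟩ := h.ne B hB
        exact absurd (h.lt B hB x hx) (by omega)
      · rintro rfl
        constructor <;> simp
    rw [this]
    simp [Op, hQ0]
  | succ k ih =>
    have hkN : k < N := hk
    obtain ⟨κ, rfl⟩ : ∃ κ : Fin N, k = κ.val := ⟨⟨k, hkN⟩, rfl⟩
    rw [pow_succ, ih hkN.le, Finset.sum_mul]
    have step : ∀ P ∈ S N κ.val,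
        Polynomial.C (∏ B ∈ P, q B.card) * Q (Op κ.val P).card * Polynomial.X =
        ∑ B ∈ ups (Op (κ.val + 1) P), Polynomial.C (∏ C ∈ ins B P, q C.card) *
          Q (Op (κ.val + 1) (ins B P)).card := by
      intro P hP
      rw [mem_S] at hP
      rw [mul_assoc, mul_comm _ Polynomial.X, hX]
      have h1 : ∀ B ∈ ups (Op (κ.val + 1) P), Polynomial.C (∏ C ∈ ins B P, q C.card) *
          Q (Op (κ.val + 1) (ins B P)).card = Polynomial.C (∏ C ∈ P, q C.card) *
            (Polynomial.C (q B.card) * Q ((Op κ.val P).card + 1 - B.card)) := by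
        intro B hB
        rw [prod_ins κ hP hB q hq0, Op_ins κ hB, Op_succ_card κ hP, Polynomial.C_mul, mul_assoc]
      rw [Finset.sum_congr rfl h1, ← Finset.mul_sum,
        sum_ups _ (fun i => Polynomial.C (q i) * Q ((Op κ.val P).card + 1 - i)),
        Op_succ_card κ hP]
    rw [Finset.sum_congr rfl step, Finset.sum_sigma']
    refine Finset.sum_bij (fun x _ => ins x.2 x.1) ?_ ?_ ?_ ?_
    · rintro ⟨P, B⟩ h
      rw [Finset.mem_sigma, mem_S] at h
      exact mem_S.2 (valid_ins κ h.1 h.2)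
    · rintro ⟨P, B⟩ h ⟨P', B'⟩ h' he
      rw [Finset.mem_sigma, mem_S] at h h'
      obtain ⟨h1, h2⟩ := inj_ins κ h.1 h'.1 h.2 h'.2 he
      simp only at h1 h2
      subst h1 h2
      rfl
    · intro P hP
      obtain ⟨P', h1, B, h2, h3⟩ := surj_ins κ (mem_S.1 hP)
      exact ⟨⟨P', B⟩, Finset.mem_sigma.2 ⟨mem_S.2 h1, h2⟩, h3⟩
    · intros; rfl

theorem integrable_poly (μ : Measure ℝ) [IsProbabilityMeasure μ]
    (K : Set ℝ) (hK : IsCompact K) (hKc : μ Kᶜ = 0) (p : Polynomial ℝ) :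
    Integrable (fun x => p.eval x) μ := by
  have h : IntegrableOn (fun x => p.eval x) K μ :=
    p.continuous.continuousOn.integrableOn_compact hK
  rwa [IntegrableOn, Measure.restrict_eq_self_of_ae_mem] at h
  exact hKc

end FreeCum

open FreeCum

theorem stmt0 (μ : Measure ℝ) [IsProbabilityMeasure μ]
    (K : Set ℝ) (hK : IsCompact K) (hKc : μ Kᶜ = 0)
    (Q : ℕ → Polynomial ℝ) (q : ℕ → ℝ)
    (hQ0 : Q 0 = 1) (hq0 : q 0 = 1)
    (hq : ∀ n : ℕ, 1 ≤ n → q n = ∫ x, x * (Q (n - 1)).eval x ∂μ)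
    (hQrec : ∀ n : ℕ, 1 ≤ n →
      Q n = Polynomial.X * Q (n - 1) - ∑ i ∈ Finset.Icc 1 n, Polynomial.C (q i) * Q (n - i)) :
    ∀ k : ℕ, 1 ≤ k →
      (∫ x, x ^ k ∂μ) =
        ∑ᶠ π ∈ {π : Finpartition (Finset.univ : Finset (Fin k)) | IsNonCrossing π},
          ∏ B ∈ π.parts, q B.card := by
  classical
  have hint := integrable_poly μ K hK hKc
  have hX : ∀ n, Polynomial.X * Q n =
      ∑ i ∈ Finset.range (n + 2), Polynomial.C (q i) * Q (n + 1 - i) := by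
    intro n
    have h := hQrec (n + 1) (by omega)
    rw [Nat.add_sub_cancel] at h
    rw [Finset.range_eq_Ico, Finset.sum_eq_sum_Ico_succ_bot (by omega)]
    have : Finset.Ico (0 + 1) (n + 2) = Finset.Icc 1 (n + 1) := by ext; simp; omega
    rw [this, hq0, Nat.sub_zero, h]
    simp
  have hQint : ∀ n, 1 ≤ n → ∫ x, (Q n).eval x ∂μ = 0 := by
    intro n
    induction n using Nat.strong_induction_on with
    | _ n ih =>
      intro hn
      have h := hQrec n hn
      have he : ∀ x, (Q n).eval x = x * (Q (n - 1)).eval x -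
          ∑ i ∈ Finset.Icc 1 n, q i * (Q (n - i)).eval x := by
        intro x; rw [h]; simp [Polynomial.eval_finsetSum]
      simp_rw [he]
      rw [integral_sub, integral_finsetSum, ← hq n hn]
      · simp_rw [integral_const_mul]
        rw [Finset.sum_eq_single n]
        · simp [hQ0]
        · intro i hi hin
          rw [Finset.mem_Icc] at hi
          rw [ih (n - i) (by omega) (by omega), mul_zero]
        · intro hh; simp at hh; omega
      · intro i _; exact (hint _).const_mul _
      · have := hint (Polynomial.X * Q (n - 1))
        simp only [Polynomial.eval_mul, Polynomial.eval_X] at this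
        exact this
      · exact integrable_finsetSum _ (fun i _ => (hint _).const_mul _)
  intro k hk
  have hexp := pow_expand Q q hQ0 hq0 hX k k le_rfl
  have he : ∀ x : ℝ, x ^ k =
      ∑ P ∈ S k k, (∏ B ∈ P, q B.card) * (Q (Op k P).card).eval x := by
    intro x
    have := congrArg (Polynomial.eval x) hexp
    simpa [Polynomial.eval_finsetSum, Polynomial.eval_prod] using this
  simp_rw [he]
  rw [integral_finsetSum _ (fun i _ => (hint _).const_mul _)]
  simp_rw [integral_const_mul]
  have h2 : ∀ P ∈ S k k, (∏ B ∈ P, q B.card) * ∫ x, (Q (Op k P).card).eval x ∂μ =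
      if Op k P = ∅ then ∏ B ∈ P, q B.card else 0 := by
    intro P _
    split_ifs with h
    · simp [h, hQ0]
    · rw [hQint _ (Finset.card_pos.2 (Finset.nonempty_iff_ne_empty.2 h)), mul_zero]
  rw [Finset.sum_congr rfl h2, ← Finset.sum_filter, ← finsum_mem_coe_finset]
  symm
  refine finsum_mem_eq_of_bijOn (fun π => π.parts) ⟨?_, ?_, ?_⟩ (fun _ _ => rfl)
  · intro π hπ
    have hπ : IsNonCrossing π := hπ
    simp only [Finset.coe_filter, Set.mem_ofPred_eq, mem_S]
    refine ⟨⟨?_, ?_, ?_, hπ, ?_⟩, ?_⟩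
    · intro B hB; exact π.nonempty_of_mem_parts hB
    · intro B _ x _; exact x.isLt
    · intro B hB C hC x hx hx'; exact π.eq_of_mem_parts hB hC hx hx'
    · intro B _ a u c _ _ _ _
      exact π.exists_mem (Finset.mem_univ u)
    · rw [Finset.eq_empty_iff_forall_notMem]
      intro x hx
      obtain ⟨C, hC, hxC⟩ := π.exists_mem (Finset.mem_univ x)
      exact (mem_Op.1 hx).2 C hC hxC
  · intro π _ π' _ h
    exact Finpartition.ext h
  · intro P hP
    simp only [Finset.coe_filter, Set.mem_ofPred_eq, mem_S] at hP
    obtain ⟨hv, ho⟩ := hP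
    refine ⟨⟨P, ?_, ?_, ?_⟩, hv.nc, rfl⟩
    · rw [Finset.supIndep_iff_pairwiseDisjoint]
      intro B hB C hC hne
      refine Finset.disjoint_left.2 fun x hx hx' => hne (hv.dj B hB C hC x hx hx')
    · rw [Finset.eq_univ_iff_forall]
      intro x
      rw [Finset.mem_sup]
      by_contra hcon
      push Not at hcon
      have : x ∈ Op k P := mem_Op.2 ⟨x.isLt, hcon⟩
      rw [ho] at this
      simp at this
    · intro hb
      exact Finset.not_nonempty_empty (hv.ne _ hb)
end

section
/- Let (q_n)_{n≥0} be any sequence of real numbers with q_0 = 1. Then for every integer ℓ ≥ 1, Σ_{π ∈ NC(ℓ)} ∏_{B ∈ π} q_{|B|} = Σ_{(s_1,…,s_ℓ) ∈ S(ℓ)} ∏_{i=1}^{ℓ} q_{s_i}. -/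
/-- `S(ℓ)`: tuples `(s_1,…,s_ℓ)` of nonnegative integers whose partial sums satisfy
`s_1 + ⋯ + s_m ≤ m` for every `m ∈ {1,…,ℓ}` and with `s_1 + ⋯ + s_ℓ = ℓ`
(here indexed by `Fin ℓ`, zero-based). -/
def Sset (ℓ : ℕ) : Set (Fin ℓ → ℕ) :=
  {s | (∀ m : Fin ℓ, ∑ j ∈ Finset.univ.filter (fun j => j ≤ m), s j ≤ (m : ℕ) + 1) ∧
        ∑ j, s j = ℓ}

/-- Functions sending an element to the maximum of its block. -/
def GoodFun (n : ℕ) : Set (Fin n → Fin n) :=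
  {g | (∀ x, x ≤ g x) ∧ ∀ x y, x ≤ y → y ≤ g x → g y ≤ g x}

/-- Fibre sizes. -/
def fibSize {n : ℕ} (g : Fin n → Fin n) (i : Fin n) : ℕ :=
  (Finset.univ.filter (fun x => g x = i)).card

open Classical in
/-- The partition into fibres. -/
noncomputable def fibPart {n : ℕ} (g : Fin n → Fin n) :
    Finpartition (Finset.univ : Finset (Fin n)) :=
  Finpartition.ofSetoid (Setoid.ker g)

theorem GoodFun.idem {n : ℕ} {g : Fin n → Fin n} (hg : g ∈ GoodFun n) (x : Fin n) :
    g (g x) = g x :=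
  le_antisymm (hg.2 x (g x) (hg.1 x) le_rfl) (hg.1 _)

theorem fibPart_parts {n : ℕ} (g : Fin n → Fin n) :
    (fibPart g).parts =
      (Finset.univ.image g).image (fun i => Finset.univ.filter (fun x => g x = i)) := by
  classical
  ext B
  simp only [fibPart, Finpartition.ofSetoid, Finpartition.ofSetSetoid, Finset.mem_image,
    Finset.mem_univ, true_and, exists_exists_eq_and]
  constructor
  · rintro ⟨a, rfl⟩
    refine ⟨a, ?_⟩
    ext x
    simp [Setoid.ker_def, eq_comm]
  · rintro ⟨a, rfl⟩
    refine ⟨a, ?_⟩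
    ext x
    simp [Setoid.ker_def, eq_comm]

theorem fibPart_prod {n : ℕ} (q : ℕ → ℝ) (hq0 : q 0 = 1) (g : Fin n → Fin n) :
    ∏ B ∈ (fibPart g).parts, q B.card = ∏ i, q (fibSize g i) := by
  classical
  rw [fibPart_parts, Finset.prod_image]
  · refine Finset.prod_subset (Finset.subset_univ _) ?_
    intro i _ hi
    have : (Finset.univ.filter (fun x => g x = i)) = ∅ := by
      ext x
      simp only [Finset.mem_filter, Finset.mem_univ, true_and, Finset.notMem_empty, iff_false]
      rintro rfl
      exact hi (Finset.mem_image_of_mem _ (Finset.mem_univ _))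
    rw [this]
    simpa using hq0
  · intro i hi j hj hij
    simp only [Finset.coe_image, Set.mem_image, Finset.coe_univ, Set.mem_univ, true_and] at hi
    obtain ⟨x, rfl⟩ := hi
    have : x ∈ Finset.univ.filter (fun y => g y = g x) := by simp
    simp only at hij
    rw [hij] at this
    simpa using this

theorem fibPart_bijOn (n : ℕ) :
    Set.BijOn fibPart (GoodFun n)
      {π : Finpartition (Finset.univ : Finset (Fin n)) | IsNonCrossing π} := by
  classical
  refine ⟨?_, ?_, ?_⟩
  · intro g hg a b c d hab hbc hcd B₁ hB₁ B₂ hB₂ ha hc hb hd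
    rw [fibPart_parts] at hB₁ hB₂
    simp only [Finset.mem_image, Finset.mem_univ, true_and, exists_exists_eq_and] at hB₁ hB₂
    obtain ⟨u, rfl⟩ := hB₁
    obtain ⟨v, rfl⟩ := hB₂
    simp only [Finset.mem_filter, Finset.mem_univ, true_and] at ha hb hc hd
    have h1 : g b ≤ g a := hg.2 a b hab.le (by have := hg.1 c; rw [hc] at this; rw [ha]; omega)
    have h2 : g c ≤ g b := hg.2 b c hbc.le (by have := hg.1 d; rw [hd] at this; rw [hb]; omega)
    have : g u = g v := by
      rw [← hb]
      apply le_antisymm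
      · rw [← hc]; exact h2
      · rw [← ha]; exact h1
    simp [this]
  · intro g hg g' hg' h
    have key : ∀ g g' : Fin n → Fin n, g ∈ GoodFun n → g' ∈ GoodFun n →
        fibPart g = fibPart g' → ∀ x, g x ≤ g' x := by
      intro g g' hg hg' h x
      have hp : (Finset.univ.filter (fun y => g y = g x)) ∈ (fibPart g).parts := by
        rw [fibPart_parts]
        exact Finset.mem_image_of_mem _ (Finset.mem_image_of_mem _ (Finset.mem_univ _))
      rw [h, fibPart_parts] at hp
      simp only [Finset.mem_image, Finset.mem_univ, true_and, exists_exists_eq_and] at hp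
      obtain ⟨u, hu⟩ := hp
      have e1 : x ∈ Finset.univ.filter (fun y => g y = g x) := by simp
      have e2 : g x ∈ Finset.univ.filter (fun y => g y = g x) := by simp [GoodFun.idem hg]
      rw [← hu] at e1 e2
      simp only [Finset.mem_filter, Finset.mem_univ, true_and] at e1 e2
      have := hg'.1 (g x)
      rw [e2, ← e1] at this
      exact this
    funext x
    exact le_antisymm (key g g' hg hg' h x) (key g' g hg' hg h.symm x)
  · intro π hπ
    have hne : ∀ x, (π.part x).Nonempty := fun x =>
      ⟨x, π.mem_part (Finset.mem_univ x)⟩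
    let g : Fin n → Fin n := fun x => (π.part x).max' (hne x)
    have hgm : ∀ x, g x ∈ π.part x := fun x => Finset.max'_mem _ _
    have hpm : ∀ x, π.part x ∈ π.parts := fun x => π.part_mem.2 (Finset.mem_univ x)
    have hpe : ∀ x B, B ∈ π.parts → x ∈ B → π.part x = B := fun x B hB hx =>
      π.part_eq_of_mem hB hx
    have hle : ∀ x y, y ∈ π.part x → y ≤ g x := fun x y hy => Finset.le_max' _ _ hy
    have hxx : ∀ x, x ∈ π.part x := fun x => π.mem_part (Finset.mem_univ x)
    have hgeq : ∀ x y, g x = g y ↔ π.part x = π.part y := by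
      intro x y
      constructor
      · intro h
        rw [← hpe (g x) _ (hpm x) (hgm x), h, hpe (g y) _ (hpm y) (hgm y)]
      · intro h
        simp only [g, h]
    refine ⟨g, ⟨fun x => hle x x (hxx x), ?_⟩, ?_⟩
    · intro x y hxy hy
      by_contra hcon
      push Not at hcon
      rcases hxy.eq_or_lt with rfl | hxy
      · exact lt_irrefl _ hcon
      rcases hy.eq_or_lt with hy | hy
      · have : π.part y = π.part x := hpe y _ (hpm x) (hy ▸ hgm x)
        rw [← hgeq] at this
        exact hcon.ne' this
      · have := hπ x y (g x) (g y) hxy hy hcon _ (hpm x) _ (hpm y) (hxx x) (hgm x) (hxx y) (hgm y)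
        rw [← hgeq] at this
        exact hcon.ne this
    · apply Finpartition.ext
      rw [fibPart_parts]
      have hfib : ∀ x, (Finset.univ.filter (fun y => g y = g x)) = π.part x := by
        intro x
        ext y
        simp only [Finset.mem_filter, Finset.mem_univ, true_and, hgeq]
        exact ⟨fun h => h ▸ hxx y, fun h => hpe y _ (hpm x) h⟩
      ext B
      simp only [Finset.mem_image, Finset.mem_univ, true_and, exists_exists_eq_and, hfib]
      constructor
      · rintro ⟨a, rfl⟩
        exact hpm a
      · intro hB
        obtain ⟨a, ha⟩ := π.nonempty_of_mem_parts hB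
        exact ⟨a, hpe a B hB ha⟩

/-- Height function of a sequence. -/
def ht {n : ℕ} (s : Fin n → ℕ) (m : ℕ) : ℤ :=
  (m : ℤ) - ∑ j ∈ Finset.univ.filter (fun j : Fin n => (j : ℕ) < m), (s j : ℤ)

theorem ht_succ {n : ℕ} (s : Fin n → ℕ) (i : Fin n) :
    ht s (i + 1) = ht s i + 1 - s i := by
  have : (Finset.univ.filter (fun j : Fin n => (j : ℕ) < i + 1)) =
      insert i (Finset.univ.filter (fun j : Fin n => (j : ℕ) < i)) := by
    ext j
    simp only [Finset.mem_filter, Finset.mem_univ, true_and, Finset.mem_insert, Fin.ext_iff]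
    omega
  unfold ht
  rw [this, Finset.sum_insert (by simp)]
  push_cast
  ring

theorem ht_diff {n : ℕ} (g : Fin n → Fin n) (a b : ℕ) (hab : a ≤ b) :
    ht (fibSize g) b - ht (fibSize g) a =
      ((b : ℤ) - a) - ((Finset.univ.filter (fun x => a ≤ (g x : ℕ) ∧ (g x : ℕ) < b)).card : ℤ) := by
  have hc : ∀ m : ℕ, ∑ j ∈ Finset.univ.filter (fun j : Fin n => (j : ℕ) < m), (fibSize g j : ℤ)
      = ((Finset.univ.filter (fun x => (g x : ℕ) < m)).card : ℤ) := by
    intro m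
    rw [Finset.card_eq_sum_card_fiberwise (f := g)
      (t := Finset.univ.filter (fun j : Fin n => (j : ℕ) < m))
      (by intro x hx; simpa using hx)]
    push_cast
    refine Finset.sum_congr rfl ?_
    intro j hj
    simp only [Finset.mem_filter, Finset.mem_univ, true_and] at hj
    unfold fibSize
    congr 2
    ext x
    simp only [Finset.mem_filter, Finset.mem_univ, true_and]
    constructor
    · rintro rfl; exact ⟨hj, rfl⟩
    · exact fun h => h.2
  unfold ht
  rw [hc, hc]
  have : (Finset.univ.filter (fun x => (g x : ℕ) < b)).card =
      (Finset.univ.filter (fun x => (g x : ℕ) < a)).card +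
      (Finset.univ.filter (fun x => a ≤ (g x : ℕ) ∧ (g x : ℕ) < b)).card := by
    rw [← Finset.card_union_of_disjoint]
    · congr 1
      ext x
      simp only [Finset.mem_filter, Finset.mem_univ, true_and, Finset.mem_union]
      omega
    · rw [Finset.disjoint_left]
      intro x
      simp only [Finset.mem_filter, Finset.mem_univ, true_and]
      omega
  rw [this]
  push_cast
  ring

theorem ht_zero {n : ℕ} (s : Fin n → ℕ) : ht s 0 = 0 := by simp [ht]

theorem mem_Sset_iff {n : ℕ} (s : Fin n → ℕ) :
    s ∈ Sset n ↔ (∀ m : Fin n, 0 ≤ ht s (m + 1)) ∧ ht s n = 0 := by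
  have h1 : ∀ m : Fin n, (Finset.univ.filter (fun j : Fin n => (j : ℕ) < m + 1)) =
      Finset.univ.filter (fun j => j ≤ m) := by
    intro m; ext j; simp only [Finset.mem_filter, Finset.mem_univ, true_and, Fin.le_def]; omega
  have h2 : (Finset.univ.filter (fun j : Fin n => (j : ℕ) < n)) = Finset.univ := by
    ext j; simp
  unfold ht Sset
  simp only [Set.mem_ofPred_eq, h1, h2]
  refine and_congr (forall_congr' fun m => ?_) ?_
  · rw [sub_nonneg, ← Nat.cast_sum]; exact Nat.cast_le.symm
  · rw [sub_eq_zero, ← Nat.cast_sum, Nat.cast_inj]; exact eq_comm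

theorem ht_fib_le {n : ℕ} {g : Fin n → Fin n} (hg : g ∈ GoodFun n) (j : Fin n) :
    ht (fibSize g) (g j + 1) ≤ ht (fibSize g) j := by
  have hj := hg.1 j
  have h := ht_diff g j (g j + 1) (by omega)
  have : (Finset.Icc j (g j)).card ≤
      (Finset.univ.filter (fun x => (j : ℕ) ≤ (g x : ℕ) ∧ (g x : ℕ) < g j + 1)).card := by
    apply Finset.card_le_card
    intro x hx
    simp only [Finset.mem_Icc] at hx
    have := hg.2 j x hx.1 hx.2
    have := hg.1 x
    simp only [Finset.mem_filter, Finset.mem_univ, true_and]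
    omega
  rw [Fin.card_Icc] at this
  push_cast at h
  omega

theorem ht_fib_lt {n : ℕ} {g : Fin n → Fin n} (hg : g ∈ GoodFun n) (j t : Fin n)
    (hjt : j ≤ t) (ht' : t < g j) :
    ht (fibSize g) j < ht (fibSize g) (t + 1) := by
  have h := ht_diff g j (t + 1) (by omega)
  have : (Finset.univ.filter (fun x => (j : ℕ) ≤ (g x : ℕ) ∧ (g x : ℕ) < t + 1)).card ≤
      (Finset.Ioc j t).card := by
    apply Finset.card_le_card
    intro x hx
    simp only [Finset.mem_filter, Finset.mem_univ, true_and] at hx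
    have h1 := hg.1 x
    simp only [Finset.mem_Ioc]
    refine ⟨?_, by omega⟩
    by_contra hcon
    push Not at hcon
    have := hg.2 x j hcon (by omega)
    omega
  rw [Fin.card_Ioc] at this
  push_cast at h
  omega

theorem fibSize_mapsTo {n : ℕ} {g : Fin n → Fin n} (hg : g ∈ GoodFun n) :
    fibSize g ∈ Sset n := by
  rw [mem_Sset_iff]
  constructor
  · intro m
    have h := ht_diff g 0 (m + 1) (by omega)
    rw [ht_zero] at h
    have : (Finset.univ.filter (fun x => 0 ≤ (g x : ℕ) ∧ (g x : ℕ) < m + 1)).card ≤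
        (Finset.Iic m).card := by
      apply Finset.card_le_card
      intro x hx
      simp only [Finset.mem_filter, Finset.mem_univ, true_and] at hx
      have h1 := hg.1 x
      simp only [Finset.mem_Iic]
      omega
    rw [Fin.card_Iic] at this
    push_cast at h
    omega
  · have h := ht_diff g 0 n (by omega)
    rw [ht_zero] at h
    simp at h
    exact h

theorem fibSize_surj {n : ℕ} (s : Fin n → ℕ) (hs : s ∈ Sset n) :
    ∃ g ∈ GoodFun n, fibSize g = s := by
  classical
  have hsum := hs.2
  rw [mem_Sset_iff] at hs
  obtain ⟨hpos, hend⟩ := hs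
  have hnn : ∀ j : Fin n, 0 ≤ ht s j := by
    intro j
    rcases Nat.eq_zero_or_pos (j : ℕ) with h | h
    · rw [h, ht_zero]
    · have := hpos ⟨j - 1, by omega⟩
      simp only at this
      rwa [Nat.sub_add_cancel h] at this
  have hex : ∀ j : Fin n, ∃ i : Fin n, j ≤ i ∧ ht s (i + 1) ≤ ht s j ∧
      ∀ t : Fin n, j ≤ t → t < i → ht s j < ht s (t + 1) := by
    intro j
    have hjn := j.isLt
    let C := Finset.univ.filter (fun i : Fin n => j ≤ i ∧ ht s (i + 1) ≤ ht s j)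
    have hC : C.Nonempty := by
      refine ⟨⟨n - 1, by omega⟩, ?_⟩
      simp only [C, Finset.mem_filter, Finset.mem_univ, true_and, Fin.le_def]
      refine ⟨by omega, ?_⟩
      have : n - 1 + 1 = n := by omega
      rw [this, hend]
      exact hnn j
    have hm := C.min'_mem hC
    have hm' := hm
    simp only [C, Finset.mem_filter, Finset.mem_univ, true_and] at hm'
    refine ⟨C.min' hC, hm'.1, hm'.2, ?_⟩
    intro t hjt hti
    by_contra hcon
    push Not at hcon
    have : C.min' hC ≤ t := C.min'_le t (by simp [C, hjt, hcon])
    exact absurd hti (not_lt.2 this)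
  choose f hf1 hf2 hf3 using hex
  -- heights grow inside an arch
  have hgrow : ∀ x y : Fin n, x < y → y ≤ f x → ht s x < ht s y := by
    intro x y hxy hy
    have := hf3 x ⟨y - 1, by omega⟩ (by simp only [Fin.le_def]; omega)
      (by simp only [Fin.lt_def]; omega)
    simp only at this
    rwa [Nat.sub_add_cancel (by omega)] at this
  refine ⟨f, ⟨hf1, ?_⟩, ?_⟩
  · intro x y hxy hy
    by_contra hcon
    push Not at hcon
    have h1 := hf3 y (f x) hy hcon
    have h2 := hf2 x
    rcases hxy.eq_or_lt with rfl | hxy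
    · omega
    · have := hgrow x y hxy hy
      omega
  · have hle : ∀ i ∈ (Finset.univ : Finset (Fin n)), fibSize f i ≤ s i := by
      intro i _
      have hc : (Finset.Icc (ht s (i + 1)) (ht s i)).card = s i := by
        rw [Int.card_Icc, ht_succ]
        omega
      rw [← hc]
      unfold fibSize
      apply Finset.card_le_card_of_injOn (fun x : Fin n => ht s x)
      · intro x hx
        simp only [Finset.coe_filter, Finset.mem_univ, true_and, Set.mem_setOf_eq] at hx
        subst hx
        simp only [Finset.coe_Icc, Set.mem_Icc]
        refine ⟨hf2 x, ?_⟩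
        rcases (hf1 x).eq_or_lt with h | h
        · rw [← h]
        · exact (hgrow x _ h le_rfl).le
      · intro x hx y hy hxy
        simp only [Finset.coe_filter, Finset.mem_univ, true_and, Set.mem_setOf_eq] at hx hy
        simp only at hxy
        rcases lt_trichotomy x y with h | h | h
        · have := hgrow x y h (by rw [hx, ← hy]; exact hf1 y)
          omega
        · exact h
        · have := hgrow y x h (by rw [hy, ← hx]; exact hf1 x)
          omega
    have htot : ∑ i, fibSize f i = ∑ i, s i := by
      rw [hsum]
      have := Finset.card_eq_sum_card_fiberwise (f := f) (s := Finset.univ) (t := Finset.univ)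
        (by intro x _; simp)
      rw [Finset.card_fin] at this
      exact this.symm
    funext i
    exact (Finset.sum_eq_sum_iff_of_le hle).1 htot i (Finset.mem_univ i)

theorem fibSize_bijOn (n : ℕ) : Set.BijOn fibSize (GoodFun n) (Sset n) := by
  refine ⟨fun g hg => fibSize_mapsTo hg, ?_, fun s hs => ?_⟩
  · intro g hg g' hg' h
    funext j
    rcases lt_trichotomy (g j) (g' j) with hl | hl | hl
    · have h1 := ht_fib_le hg j
      have h2 := ht_fib_lt hg' j (g j) (hg.1 j) hl
      rw [← h] at h2
      omega
    · exact hl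
    · have h1 := ht_fib_le hg' j
      have h2 := ht_fib_lt hg j (g' j) (hg'.1 j) hl
      rw [← h] at h1
      omega
  · obtain ⟨g, hg, h⟩ := fibSize_surj s hs
    exact ⟨g, hg, h⟩

theorem stmt1 (q : ℕ → ℝ) (hq0 : q 0 = 1) :
    ∀ ℓ : ℕ, 1 ≤ ℓ →
      (∑ᶠ π ∈ {π : Finpartition (Finset.univ : Finset (Fin ℓ)) | IsNonCrossing π},
          ∏ B ∈ π.parts, q B.card) =
        ∑ᶠ s ∈ Sset ℓ, ∏ i, q (s i) := by
  intro ℓ _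
  rw [← finsum_mem_eq_of_bijOn fibPart (fibPart_bijOn ℓ) (fun g _ => rfl)]
  exact finsum_mem_eq_of_bijOn fibSize (fibSize_bijOn ℓ) (fun g _ => fibPart_prod q hq0 g)
end

section
/- Let μ be a compactly supported Borel probability measure on ℝ and let (Q_n)_{n≥0}, (q_n)_{n≥0} be defined from μ as in the context. Then for all integers ℓ ≥ 1 and n ≥ 0, ∫ λ^ℓ·Q_n(λ) dμ(λ) = Σ_{(s_1,…,s_ℓ) ∈ S(ℓ,n)} ∏_{j=1}^{ℓ} q_{s_j}. -/
open MeasureTheory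

/-- `S(ℓ,n)`: tuples `(s_1,…,s_ℓ)` of nonnegative integers whose partial sums satisfy
`s_1 + ⋯ + s_m ≤ m + n` for every `m ∈ {1,…,ℓ}` and with `s_1 + ⋯ + s_ℓ = ℓ + n`
(here indexed by `Fin ℓ`, zero-based). -/
def SsetN (ℓ n : ℕ) : Set (Fin ℓ → ℕ) :=
  {s | (∀ m : Fin ℓ, ∑ j ∈ Finset.univ.filter (fun j => j ≤ m), s j ≤ (m : ℕ) + 1 + n) ∧
        ∑ j, s j = ℓ + n}

theorem SsetN_finite (ℓ n : ℕ) : (SsetN ℓ n).Finite := by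
  apply (Set.finite_Iic (fun _ : Fin ℓ => ℓ + n)).subset
  rintro s ⟨-, h⟩ j
  show s j ≤ ℓ + n
  rw [← h]
  exact Finset.single_le_sum (f := s) (fun _ _ => Nat.zero_le _) (Finset.mem_univ j)

theorem SsetN_cons (ℓ n i : ℕ) (s : Fin ℓ → ℕ) :
    (Fin.cons i s : Fin (ℓ + 1) → ℕ) ∈ SsetN (ℓ + 1) n ↔ i ≤ n + 1 ∧ s ∈ SsetN ℓ (n + 1 - i) := by
  simp only [SsetN, Set.mem_ofPred_eq, Fin.forall_fin_succ, Finset.sum_filter, Fin.sum_univ_succ,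
    Fin.cons_zero, Fin.cons_succ, Fin.succ_le_succ_iff, Fin.val_succ, Fin.val_zero,
    Fin.zero_le, if_true]
  have h0 : ∀ j : Fin ℓ, ¬ (j.succ ≤ (0 : Fin (ℓ + 1))) := fun j => by
    simp
  simp only [h0, if_false, Finset.sum_const_zero]
  constructor
  · rintro ⟨⟨h1, h2⟩, h3⟩
    refine ⟨by omega, fun m => ?_, by omega⟩
    have := h2 m
    omega
  · rintro ⟨h1, h2, h3⟩
    refine ⟨⟨by omega, fun m => ?_⟩, by omega⟩
    have := h2 m
    omega

theorem SsetN_sum_succ (q : ℕ → ℝ) (ℓ n : ℕ) :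
    (∑ᶠ s ∈ SsetN (ℓ + 1) n, ∏ j, q (s j)) =
      ∑ i ∈ Finset.range (n + 2), q i * ∑ᶠ s ∈ SsetN ℓ (n + 1 - i), ∏ j, q (s j) := by
  have hU : SsetN (ℓ + 1) n = ⋃ i ∈ (↑(Finset.range (n + 2)) : Set ℕ),
      (fun s : Fin ℓ → ℕ => (Fin.cons i s : Fin (ℓ + 1) → ℕ)) '' SsetN ℓ (n + 1 - i) := by
    ext t
    simp only [Set.mem_iUnion, Set.mem_image, Finset.coe_range, Set.mem_Iio, exists_prop]
    constructor
    · intro h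
      rw [← Fin.cons_self_tail t, SsetN_cons] at h
      exact ⟨t 0, by omega, Fin.tail t, h.2, Fin.cons_self_tail t⟩
    · rintro ⟨i, hi, s, hs, rfl⟩
      rw [SsetN_cons]
      exact ⟨by omega, hs⟩
  rw [hU, finsum_mem_biUnion]
  · rw [finsum_mem_coe_finset]
    refine Finset.sum_congr rfl fun i _ => ?_
    rw [finsum_mem_image (fun a _ b _ h => Fin.cons_right_injective (α := fun _ => ℕ) i h),
      mul_finsum_mem]
    simp only [Fin.prod_univ_succ, Fin.cons_zero, Fin.cons_succ]
  · intro i _ k _ hik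
    rw [Function.onFun, Set.disjoint_left]
    rintro _ ⟨s, _, rfl⟩ ⟨u, _, h⟩
    apply hik
    have := congrFun h 0
    simpa using this.symm
  · exact Finset.finite_toSet _
  · intro i _
    exact (SsetN_finite _ _).image _

theorem SsetN_sum_zero (q : ℕ → ℝ) (n : ℕ) :
    (∑ᶠ s ∈ SsetN 0 n, ∏ j, q (s j)) = if n = 0 then 1 else 0 := by
  split_ifs with h
  · have : SsetN 0 n = {Fin.elim0} := by
      ext s
      simp [SsetN, h, Subsingleton.elim s Fin.elim0]
    rw [this, finsum_mem_singleton]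
    simp
  · have : SsetN 0 n = ∅ := by
      ext s
      simp [SsetN, Ne.symm h]
    rw [this, finsum_mem_empty]

theorem stmt3 (μ : Measure ℝ) [IsProbabilityMeasure μ]
    (K : Set ℝ) (hK : IsCompact K) (hKc : μ Kᶜ = 0)
    (Q : ℕ → Polynomial ℝ) (q : ℕ → ℝ)
    (hQ0 : Q 0 = 1) (hq0 : q 0 = 1)
    (hq : ∀ n : ℕ, 1 ≤ n → q n = ∫ x, x * (Q (n - 1)).eval x ∂μ)
    (hQrec : ∀ n : ℕ, 1 ≤ n →
      Q n = Polynomial.X * Q (n - 1) - ∑ i ∈ Finset.Icc 1 n, Polynomial.C (q i) * Q (n - i)) :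
    ∀ ℓ n : ℕ, 1 ≤ ℓ →
      (∫ x, x ^ ℓ * (Q n).eval x ∂μ) =
        ∑ᶠ s ∈ SsetN ℓ n, ∏ j, q (s j) := by
  have hint : ∀ p : Polynomial ℝ, Integrable (fun x => p.eval x) μ := by
    intro p
    have h : IntegrableOn (fun x => p.eval x) K μ :=
      p.continuous.continuousOn.integrableOn_compact hK
    have hr : μ.restrict K = μ := Measure.restrict_eq_self_of_ae_mem (by
      rw [ae_iff]; exact hKc)
    rwa [IntegrableOn, hr] at h
  have hX : ∀ n, Polynomial.X * Q n =
      ∑ i ∈ Finset.range (n + 2), Polynomial.C (q i) * Q (n + 1 - i) := by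
    intro n
    have h := hQrec (n + 1) (by omega)
    rw [Finset.range_eq_Ico, Finset.sum_eq_sum_Ico_succ_bot (by omega)]
    have he : Finset.Ico (0 + 1) (n + 2) = Finset.Icc 1 (n + 1) := by
      ext; simp; omega
    rw [he, hq0]
    simp only [Nat.add_sub_cancel] at h
    simp only [Polynomial.C_1, one_mul, Nat.sub_zero]
    rw [h]
    ring
  have key : ∀ ℓ n : ℕ, (∫ x, x ^ (ℓ + 1) * (Q n).eval x ∂μ) =
      ∑ᶠ s ∈ SsetN (ℓ + 1) n, ∏ j, q (s j) := by
    intro ℓ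
    induction ℓ with
    | zero =>
      intro n
      rw [SsetN_sum_succ, Finset.sum_range_succ, Finset.sum_eq_zero]
      · rw [SsetN_sum_zero]
        simp [hq (n + 1)]
      · intro i hi
        rw [SsetN_sum_zero, if_neg, mul_zero]
        have := Finset.mem_range.1 hi
        omega
    | succ ℓ ih =>
      intro n
      rw [SsetN_sum_succ]
      simp only [← ih]
      have hpt : ∀ x : ℝ, x ^ (ℓ + 1 + 1) * (Q n).eval x =
          ∑ i ∈ Finset.range (n + 2), q i * (x ^ (ℓ + 1) * (Q (n + 1 - i)).eval x) := by
        intro x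
        have h := congrArg (fun p => x ^ (ℓ + 1) * Polynomial.eval x p) (hX n)
        simp only [Polynomial.eval_mul, Polynomial.eval_X, Polynomial.eval_finsetSum,
          Polynomial.eval_C, Finset.mul_sum] at h
        rw [pow_succ, mul_assoc, h]
        exact Finset.sum_congr rfl fun i _ => by ring
      simp only [hpt]
      rw [integral_finsetSum]
      · exact Finset.sum_congr rfl fun i _ => integral_const_mul _ _
      · intro i _
        have h := (hint (Polynomial.X ^ (ℓ + 1) * Q (n + 1 - i))).const_mul (q i)
        simpa using h
  intro ℓ n hℓ
  obtain ⟨k, rfl⟩ := Nat.exists_eq_add_of_le' hℓ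
  exact key k n
end

section
/- Let μ be a compactly supported Borel probability measure on ℝ and let (Q_n)_{n≥0}, (q_n)_{n≥0} be defined from μ as in the context. Define the doubly-indexed sequence (c_{k,j})_{k,j≥0} of real numbers recursively by c_{0,0} = 1, c_{0,j} = 0 for j ≥ 1, and c_{k,j} = Σ_{m=0}^{j+1} c_{k−1,m}·q_{j+1−m} for k ≥ 1 and j ≥ 0. Then c_{k,j} = ∫ λ^k·Q_j(λ) dμ(λ) for all k, j ≥ 0. -/
open MeasureTheory

theorem stmt5 (μ : Measure ℝ) [IsProbabilityMeasure μ]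
    (K : Set ℝ) (hK : IsCompact K) (hKc : μ Kᶜ = 0)
    (Q : ℕ → Polynomial ℝ) (q : ℕ → ℝ)
    (hQ0 : Q 0 = 1) (hq0 : q 0 = 1)
    (hq : ∀ n : ℕ, 1 ≤ n → q n = ∫ x, x * (Q (n - 1)).eval x ∂μ)
    (hQrec : ∀ n : ℕ, 1 ≤ n →
      Q n = Polynomial.X * Q (n - 1) - ∑ i ∈ Finset.Icc 1 n, Polynomial.C (q i) * Q (n - i))
    (c : ℕ → ℕ → ℝ)
    (hc00 : c 0 0 = 1)
    (hc0j : ∀ j : ℕ, 1 ≤ j → c 0 j = 0)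
    (hcrec : ∀ k : ℕ, 1 ≤ k → ∀ j : ℕ,
      c k j = ∑ m ∈ Finset.range (j + 2), c (k - 1) m * q (j + 1 - m)) :
    ∀ k j : ℕ, c k j = ∫ x, x ^ k * (Q j).eval x ∂μ := by
  have hint : ∀ p : Polynomial ℝ, Integrable (fun x => p.eval x) μ := by
    intro p
    have h1 : IntegrableOn (fun x => p.eval x) K μ :=
      p.continuous.continuousOn.integrableOn_compact hK
    have h2 : μ.restrict K = μ := Measure.restrict_eq_self_of_ae_mem (by
      rw [ae_iff]; exact hKc)
    rwa [IntegrableOn, h2] at h1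
  have hX : ∀ j : ℕ, Polynomial.X * Q j =
      ∑ m ∈ Finset.range (j + 2), Polynomial.C (q (j + 1 - m)) * Q m := by
    intro j
    have h := hQrec (j + 1) (by omega)
    have h3 : ∑ m ∈ Finset.range (j + 1), Polynomial.C (q (j + 1 - m)) * Q m
        = ∑ i ∈ Finset.Icc 1 (j + 1), Polynomial.C (q i) * Q (j + 1 - i) := by
      refine Finset.sum_bij' (fun m _ => j + 1 - m) (fun i _ => j + 1 - i) ?_ ?_ ?_ ?_ ?_
      · intro a ha; simp only [Finset.mem_range, Finset.mem_Icc] at *; omega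
      · intro a ha; simp only [Finset.mem_range, Finset.mem_Icc] at *; omega
      · intro a ha; simp only [Finset.mem_range] at *; omega
      · intro a ha; simp only [Finset.mem_Icc] at *; omega
      · intro a ha
        have h4 : j + 1 - (j + 1 - a) = a := by simp only [Finset.mem_range] at ha; omega
        simp only [h4]
    rw [Finset.sum_range_succ, h3]
    simp only [Nat.add_sub_cancel] at h
    simp only [Nat.sub_self, hq0, Polynomial.C_1, one_mul]
    rw [h]; ring
  have hL : ∀ (k j : ℕ), ∫ x, x ^ (k + 1) * (Q j).eval x ∂μ =
      ∑ m ∈ Finset.range (j + 2), (∫ x, x ^ k * (Q m).eval x ∂μ) * q (j + 1 - m) := by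
    intro k j
    have h1 : ∀ x : ℝ, x ^ (k + 1) * (Q j).eval x =
        ∑ m ∈ Finset.range (j + 2), (x ^ k * (Q m).eval x) * q (j + 1 - m) := by
      intro x
      have h2 := congrArg (Polynomial.eval x) (hX j)
      simp only [Polynomial.eval_mul, Polynomial.eval_X, Polynomial.eval_finset_sum,
        Polynomial.eval_C] at h2
      rw [pow_succ, mul_assoc, h2, Finset.mul_sum]
      exact Finset.sum_congr rfl fun m _ => by ring
    simp only [h1]
    rw [integral_finset_sum]
    · exact Finset.sum_congr rfl fun m _ => integral_mul_const _ _
    · intro m _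
      have h5 := (hint (Polynomial.X ^ k * Q m)).mul_const (q (j + 1 - m))
      simpa using h5
  have hz : ∀ n : ℕ, ∫ x, x ^ 0 * (Q (n + 1)).eval x ∂μ = 0 := by
    intro n
    induction n using Nat.strong_induction_on with
    | _ n ih =>
      have h := hL 0 n
      have hqn := hq (n + 1) (by omega)
      simp only [Nat.add_sub_cancel] at hqn
      rw [Finset.sum_range_succ, Finset.sum_range_succ'] at h
      rw [Finset.sum_eq_zero (fun m hm => by
        rw [ih m (Finset.mem_range.mp hm), zero_mul])] at h
      simp only [zero_add, pow_one, pow_zero, one_mul, hQ0, Polynomial.eval_one, Nat.sub_zero,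
        Nat.sub_self, hq0, mul_one, integral_const, probReal_univ, smul_eq_mul] at h ⊢
      linarith
  intro k
  induction k with
  | zero =>
    intro j
    cases j with
    | zero => simp [hc00, hQ0]
    | succ n => rw [hz n, hc0j _ (by omega)]
  | succ k ih =>
    intro j
    rw [hL, hcrec (k + 1) (by omega)]
    simp only [Nat.add_sub_cancel, ih]
end

section
/- Fix integers N ≥ 1 and t ≥ 1. Let W be an arbitrary real N×N matrix, let (u_s)_{s=1}^{t} be vectors in ℝ^N, and let (b_{s,i})_{1≤i≤s≤t} and (d_{s,i})_{1≤i≤s≤t−1} be real numbers. Define r_s := W·u_s − Σ_{i=1}^{s} b_{s,i}·u_i for 1 ≤ s ≤ t, and ū_1 := u_1, ū_s := u_s − Σ_{i=1}^{s−1} d_{s−1,i}·r_i for 2 ≤ s ≤ t. Let B ∈ ℝ^{t×t} be the lower triangular matrix with entries B_{s,i} = b_{s,i} for i ≤ s, and D ∈ ℝ^{t×t} the strictly lower triangular matrix with entries D_{s,i} = d_{s−1,i} for i < s. Over the polynomial ring ℝ[λ], the t×t matrix I_t − λ·D + B·D is lower triangular with all diagonal entries equal to 1, hence invertible in the ring of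 t×t matrices over ℝ[λ]; let P(λ) := (I_t − λ·D + B·D)^{−1}·(λ·I_t − B), a lower triangular matrix whose entries P_{s,i}(λ) are real polynomials in λ. Then r_s = Σ_{i=1}^{s} P_{s,i}(W)·ū_i for every 1 ≤ s ≤ t, where P_{s,i}(W) denotes the evaluation of the polynomial P_{s,i} at the matrix W. -/
/-- The action of a matrix over `ℝ[X]` on a family of vectors, with `X` acting as `W`. -/
noncomputable def polyAct {N t : ℕ} (W : Matrix (Fin N) (Fin N) ℝ)
    (M : Matrix (Fin t) (Fin t) (Polynomial ℝ)) (v : Fin t → Fin N → ℝ) : Fin t → Fin N → ℝ :=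
  fun s => ∑ i, (Polynomial.aeval W (M s i)).mulVec (v i)

theorem polyAct_mul {N t : ℕ} (W : Matrix (Fin N) (Fin N) ℝ)
    (M M' : Matrix (Fin t) (Fin t) (Polynomial ℝ)) (v : Fin t → Fin N → ℝ) :
    polyAct W (M * M') v = polyAct W M (polyAct W M' v) := by
  funext s
  simp only [polyAct, Matrix.mul_apply, map_sum, map_mul, Matrix.sum_mulVec, Matrix.mulVec_sum,
    Matrix.mulVec_mulVec]
  exact Finset.sum_comm

theorem polyAct_sub {N t : ℕ} (W : Matrix (Fin N) (Fin N) ℝ)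
    (M M' : Matrix (Fin t) (Fin t) (Polynomial ℝ)) (v : Fin t → Fin N → ℝ) :
    polyAct W (M - M') v = polyAct W M v - polyAct W M' v := by
  funext s
  simp [polyAct, Matrix.sub_mulVec]

theorem polyAct_add_right {N t : ℕ} (W : Matrix (Fin N) (Fin N) ℝ)
    (M : Matrix (Fin t) (Fin t) (Polynomial ℝ)) (v w : Fin t → Fin N → ℝ) :
    polyAct W M (v + w) = polyAct W M v + polyAct W M w := by
  funext s
  simp [polyAct, Matrix.mulVec_add, Finset.sum_add_distrib]

theorem polyAct_one {N t : ℕ} (W : Matrix (Fin N) (Fin N) ℝ) (v : Fin t → Fin N → ℝ) :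
    polyAct W 1 v = v := by
  funext s
  unfold polyAct
  rw [Finset.sum_eq_single s]
  · simp
  · intro b _ hb
    simp [Matrix.one_apply_ne hb.symm]
  · simp

theorem polyAct_X {N t : ℕ} (W : Matrix (Fin N) (Fin N) ℝ) (v : Fin t → Fin N → ℝ) (s : Fin t) :
    polyAct W ((Polynomial.X : Polynomial ℝ) • 1) v s = W.mulVec (v s) := by
  unfold polyAct
  rw [Finset.sum_eq_single s]
  · simp
  · intro b _ hb
    simp [Matrix.one_apply_ne hb.symm]
  · simp

theorem polyAct_C {N t : ℕ} (W : Matrix (Fin N) (Fin N) ℝ) (B : Matrix (Fin t) (Fin t) ℝ)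
    (v : Fin t → Fin N → ℝ) (s : Fin t) :
    polyAct W (B.map Polynomial.C) v s = ∑ i, B s i • v i := by
  unfold polyAct
  refine Finset.sum_congr rfl fun i _ => ?_
  rw [Matrix.map_apply, Polynomial.aeval_C, Algebra.algebraMap_eq_smul_one, Matrix.smul_mulVec,
    Matrix.one_mulVec]

theorem stmt7 (N t : ℕ) (hN : 1 ≤ N) (ht : 1 ≤ t)
    (W : Matrix (Fin N) (Fin N) ℝ)
    (u r ubar : Fin t → Fin N → ℝ)
    (B D : Matrix (Fin t) (Fin t) ℝ)
    (hB : ∀ i j : Fin t, i < j → B i j = 0)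
    (hD : ∀ i j : Fin t, i ≤ j → D i j = 0)
    (hr : ∀ s : Fin t,
      r s = W.mulVec (u s) - ∑ i ∈ Finset.univ.filter (fun i => i ≤ s), B s i • u i)
    (hubar : ∀ s : Fin t,
      ubar s = u s - ∑ i ∈ Finset.univ.filter (fun i => i < s), D s i • r i) :
    ∀ s : Fin t,
      r s = ∑ i ∈ Finset.univ.filter (fun i => i ≤ s),
        (Polynomial.aeval W
          (((((1 : Matrix (Fin t) (Fin t) (Polynomial ℝ)) -
                (Polynomial.X : Polynomial ℝ) • D.map Polynomial.C +
                (B.map Polynomial.C) * (D.map Polynomial.C))⁻¹ *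
              ((Polynomial.X : Polynomial ℝ) • (1 : Matrix (Fin t) (Fin t) (Polynomial ℝ)) -
                B.map Polynomial.C)) s i))).mulVec (ubar i) := by
  set L : Matrix (Fin t) (Fin t) (Polynomial ℝ) :=
    (Polynomial.X : Polynomial ℝ) • (1 : Matrix (Fin t) (Fin t) (Polynomial ℝ)) -
      B.map Polynomial.C with hL
  set A : Matrix (Fin t) (Fin t) (Polynomial ℝ) :=
    1 - (Polynomial.X : Polynomial ℝ) • D.map Polynomial.C +
      (B.map Polynomial.C) * (D.map Polynomial.C) with hA
  have hAL : A = 1 - L * D.map Polynomial.C := by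
    rw [hA, hL, Matrix.sub_mul, Matrix.smul_mul, Matrix.one_mul]
    abel
  have hLtri : L.BlockTriangular OrderDual.toDual := by
    intro i j hij
    have hij' : i < j := hij
    simp [hL, hB i j hij', Matrix.one_apply_ne hij'.ne]
  have hLD : ∀ i j : Fin t, i ≤ j → (L * D.map Polynomial.C) i j = 0 := by
    intro i j hij
    rw [Matrix.mul_apply]
    refine Finset.sum_eq_zero fun k _ => ?_
    rcases lt_or_ge i k with h | h
    · rw [hLtri (show OrderDual.toDual k < OrderDual.toDual i from h), zero_mul]
    · simp [hD k j (h.trans hij)]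
  have hAtri : A.BlockTriangular OrderDual.toDual := by
    intro i j hij
    have hij' : i < j := hij
    rw [hAL, Matrix.sub_apply, hLD i j hij'.le, Matrix.one_apply_ne hij'.ne, sub_zero]
  have hdet : A.det = 1 := by
    rw [Matrix.det_of_lowerTriangular A hAtri]
    refine Finset.prod_eq_one fun i _ => ?_
    rw [hAL, Matrix.sub_apply, hLD i i le_rfl, Matrix.one_apply_eq, sub_zero]
  have hunit : IsUnit A.det := by rw [hdet]; exact isUnit_one
  have hP : (A⁻¹ * L).BlockTriangular OrderDual.toDual := by
    haveI : Invertible A := Matrix.invertibleOfIsUnitDet A hunit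
    exact (Matrix.blockTriangular_inv_of_blockTriangular hAtri).mul hLtri
  have hr' : r = polyAct W L u := by
    funext s
    rw [hr s, hL, polyAct_sub, Pi.sub_apply, polyAct_X, polyAct_C, Finset.sum_filter]
    congr 1
    refine Finset.sum_congr rfl fun i _ => ?_
    split_ifs with h
    · rfl
    · rw [hB s i (not_le.mp h), zero_smul]
  have hu : u = ubar + polyAct W (D.map Polynomial.C) r := by
    funext s
    rw [Pi.add_apply, hubar s, polyAct_C, Finset.sum_filter]
    have : ∑ i, (if i < s then D s i • r i else 0) = ∑ i, D s i • r i := by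
      refine Finset.sum_congr rfl fun i _ => ?_
      split_ifs with h
      · rfl
      · rw [hD s i (not_lt.mp h), zero_smul]
    rw [this, sub_add_cancel]
  have key : polyAct W A r = polyAct W L ubar := by
    rw [hAL, polyAct_sub, polyAct_one, polyAct_mul, sub_eq_iff_eq_add, ← polyAct_add_right, ← hu]
    exact hr'
  have hfin : r = polyAct W (A⁻¹ * L) ubar := by
    rw [polyAct_mul, ← key, ← polyAct_mul, Matrix.nonsing_inv_mul A hunit, polyAct_one]
  intro s
  rw [Finset.sum_filter]
  refine (congrFun hfin s).trans (Finset.sum_congr rfl fun i _ => ?_)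
  split_ifs with h
  · rfl
  · rw [hP (show OrderDual.toDual i < OrderDual.toDual s from not_le.mp h), map_zero,
      Matrix.zero_mulVec]
end

section
/- Let μ be a compactly supported Borel probability measure on ℝ, fix t ≥ 1, and let D ∈ ℝ^{t×t} be strictly lower triangular. For every lower triangular B ∈ ℝ^{t×t} and every λ ∈ ℝ, the matrix I_t − λ·D + B·D is lower triangular with unit diagonal, hence invertible; set P_B(λ) := (I_t − λ·D + B·D)^{−1}·(λ·I_t − B), whose entries are polynomials in λ. Then there exists exactly one lower triangular matrix B ∈ ℝ^{t×t} such that ∫ P_B(λ) dμ(λ) = 0 (the integral taken entrywise). -/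
open MeasureTheory

namespace Stmt8

/-- matrices vanishing at entries `(i,j)` with `i < j + d` -/
def L (t d : ℕ) (A : Matrix (Fin t) (Fin t) ℝ) : Prop :=
  ∀ i j : Fin t, (i : ℕ) < j + d → A i j = 0

lemma L.mul {t d e : ℕ} {A B : Matrix (Fin t) (Fin t) ℝ} (hA : L t d A) (hB : L t e B) :
    L t (d + e) (A * B) := by
  intro i j h
  rw [Matrix.mul_apply]
  apply Finset.sum_eq_zero
  intro k _
  by_cases h1 : (i : ℕ) < k + d
  · rw [hA i k h1, zero_mul]
  · rw [hB k j (by omega), mul_zero]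

lemma L.add {t d : ℕ} {A B : Matrix (Fin t) (Fin t) ℝ} (hA : L t d A) (hB : L t d B) :
    L t d (A + B) := by
  intro i j h
  rw [Matrix.add_apply, hA i j h, hB i j h, add_zero]

lemma L.sub {t d : ℕ} {A B : Matrix (Fin t) (Fin t) ℝ} (hA : L t d A) (hB : L t d B) :
    L t d (A - B) := by
  intro i j h
  rw [Matrix.sub_apply, hA i j h, hB i j h, sub_zero]

lemma L.smul {t d : ℕ} {A : Matrix (Fin t) (Fin t) ℝ} (hA : L t d A) (x : ℝ) :
    L t d (x • A) := by
  intro i j h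
  rw [Matrix.smul_apply, hA i j h, smul_zero]

lemma L.mono {t d e : ℕ} {A : Matrix (Fin t) (Fin t) ℝ} (hA : L t d A) (h : e ≤ d) :
    L t e A := fun i j hij => hA i j (by omega)

lemma L.one (t : ℕ) : L t 0 1 := by
  intro i j h
  exact Matrix.one_apply_ne (by rintro rfl; omega)

lemma L.eq_zero {t : ℕ} {A : Matrix (Fin t) (Fin t) ℝ} (hA : L t t A) : A = 0 := by
  ext i j
  exact hA i j (by omega)

variable {t : ℕ}

/-- the matrix to be inverted -/
noncomputable def Q (D B : Matrix (Fin t) (Fin t) ℝ) (x : ℝ) : Matrix (Fin t) (Fin t) ℝ :=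
  1 - x • D + B * D

/-- the resolvent-like matrix -/
noncomputable def P (D B : Matrix (Fin t) (Fin t) ℝ) (x : ℝ) : Matrix (Fin t) (Fin t) ℝ :=
  (Q D B x)⁻¹ * (x • (1 : Matrix (Fin t) (Fin t) ℝ) - B)

lemma Q_low {D B : Matrix (Fin t) (Fin t) ℝ} (hD : L t 1 D) (hB : L t 0 B) (x : ℝ) :
    L t 0 (Q D B x) :=
  ((L.one t).sub ((hD.smul x).mono (by omega))).add ((hB.mul hD).mono (by omega))

lemma Q_det {D B : Matrix (Fin t) (Fin t) ℝ} (hD : L t 1 D) (hB : L t 0 B) (x : ℝ) :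
    (Q D B x).det = 1 := by
  rw [Matrix.det_of_lowerTriangular]
  · apply Finset.prod_eq_one
    intro i _
    have h := (hB.mul hD) i i (by omega)
    have h' := hD i i (by omega)
    simp [Q, h, h']
  · intro i j h
    exact Q_low hD hB x i j (by simpa using h)

lemma inv_low {D B : Matrix (Fin t) (Fin t) ℝ} (hD : L t 1 D) (hB : L t 0 B) (x : ℝ) :
    L t 0 (Q D B x)⁻¹ := by
  have hdet := Q_det hD hB x
  haveI : Invertible (Q D B x) := Matrix.invertibleOfIsUnitDet _ (by simp [hdet])
  have h : Matrix.BlockTriangular (Q D B x) (OrderDual.toDual : Fin t → (Fin t)ᵒᵈ) := by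
    intro i j h
    exact Q_low hD hB x i j (by simpa using h)
  have h2 := Matrix.blockTriangular_inv_of_blockTriangular h
  intro i j hij
  exact h2 (by simpa using hij)

lemma P_low {D B : Matrix (Fin t) (Fin t) ℝ} (hD : L t 1 D) (hB : L t 0 B) (x : ℝ) :
    L t 0 (P D B x) :=
  (inv_low hD hB x).mul (((L.one t).smul x).sub hB)

lemma P_eq {D B : Matrix (Fin t) (Fin t) ℝ} (hD : L t 1 D) (hB : L t 0 B) (x : ℝ) :
    P D B x = (x • (1 : Matrix (Fin t) (Fin t) ℝ) - B)
      + P D B x * D * (x • (1 : Matrix (Fin t) (Fin t) ℝ) - B) := by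
  have h1 : (Q D B x)⁻¹ * Q D B x = 1 :=
    Matrix.nonsing_inv_mul _ (by simp [Q_det hD hB x])
  have hQ : Q D B x = 1 - (x • (1 : Matrix (Fin t) (Fin t) ℝ) - B) * D := by
    simp [Q, sub_mul]; abel
  unfold P
  generalize (Q D B x)⁻¹ = G at *
  rw [hQ] at h1
  generalize (x • (1 : Matrix (Fin t) (Fin t) ℝ) - B) = M at *
  have h2 : G = 1 + G * M * D := by
    rw [mul_sub, mul_one, ← mul_assoc] at h1
    rw [← h1]; abel
  calc G * M = (1 + G * M * D) * M := by rw [← h2]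
    _ = _ := by rw [add_mul, one_mul]

lemma P_cont {D B : Matrix (Fin t) (Fin t) ℝ} (hD : L t 1 D) (hB : L t 0 B) :
    Continuous (P D B) := by
  have h : P D B = fun x => (Q D B x).adjugate * (x • (1 : Matrix (Fin t) (Fin t) ℝ) - B) := by
    funext x
    rw [P, Matrix.inv_def, Q_det hD hB x]
    simp
  rw [h]
  have hQ : Continuous (Q D B) := by unfold Q; fun_prop
  exact hQ.matrix_adjugate.matrix_mul (by fun_prop)

lemma P_int (μ : Measure ℝ) [IsProbabilityMeasure μ]
    (K : Set ℝ) (hK : IsCompact K) (hKc : μ Kᶜ = 0)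
    {D B : Matrix (Fin t) (Fin t) ℝ} (hD : L t 1 D) (hB : L t 0 B) (i j : Fin t) :
    Integrable (fun x => P D B x i j) μ := by
  have hc : Continuous (fun x => P D B x i j) := (P_cont hD hB).matrix_elem i j
  have h := hc.continuousOn.integrableOn_compact (μ := μ) hK
  have hr : μ.restrict K = μ := Measure.restrict_eq_self_of_ae_mem (by
    rw [ae_iff]; exact hKc)
  rwa [IntegrableOn, hr] at h

lemma diff_low {D B B' : Matrix (Fin t) (Fin t) ℝ} (hD : L t 1 D) (hB : L t 0 B)
    (hB' : L t 0 B') (x : ℝ) {d : ℕ} (h : L t d (B - B')) :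
    L t (d + 1) ((B - B') + (P D B x - P D B' x)) := by
  have e1 := P_eq hD hB x
  have e2 := P_eq hD hB' x
  have l1 := P_low hD hB x
  have l2 := P_low hD hB' x
  have lM : L t 0 (x • (1 : Matrix (Fin t) (Fin t) ℝ) - B') := ((L.one t).smul x).sub hB'
  have key : (B - B') + (P D B x - P D B' x) =
      (P D B x - P D B' x) * D * (x • (1 : Matrix (Fin t) (Fin t) ℝ) - B')
      - P D B x * D * (B - B') := by
    generalize P D B x = p at *
    generalize P D B' x = p' at *
    generalize (x • (1 : Matrix (Fin t) (Fin t) ℝ)) = m at *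
    calc (B - B') + (p - p') = (B - B') + ((m - B + p * D * (m - B)) 
          - (m - B' + p' * D * (m - B'))) := by rw [← e1, ← e2]
      _ = _ := by noncomm_ring
  have a1 : L t (d + 1) (P D B x * D * (B - B')) := ((l1.mul hD).mul h).mono (by omega)
  have step : ∀ e, e ≤ d → L t e (P D B x - P D B' x) := by
    intro e
    induction e with
    | zero => intro _; exact l1.sub l2
    | succ e ih =>
      intro he
      have h3 := (((ih (by omega)).mul hD).mul lM).mono (show e + 1 ≤ _ by omega)
      have h4 := (h3.sub (a1.mono (by omega))).sub (h.mono he)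
      rw [← key] at h4
      simpa using h4
  rw [key]
  exact ((((step d le_rfl).mul hD).mul lM).mono (by omega)).sub a1

/-- the fixed-point map -/
noncomputable def Phi (μ : Measure ℝ) (D B : Matrix (Fin t) (Fin t) ℝ) :
    Matrix (Fin t) (Fin t) ℝ := fun i j => B i j + ∫ x, P D B x i j ∂μ

lemma Phi_low (μ : Measure ℝ) {D B : Matrix (Fin t) (Fin t) ℝ} (hD : L t 1 D) (hB : L t 0 B) :
    L t 0 (Phi μ D B) := by
  intro i j h
  have : ∀ x, P D B x i j = 0 := fun x => P_low hD hB x i j h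
  simp [Phi, this, hB i j h]

lemma Phi_diff (μ : Measure ℝ) [IsProbabilityMeasure μ]
    (K : Set ℝ) (hK : IsCompact K) (hKc : μ Kᶜ = 0)
    {D B B' : Matrix (Fin t) (Fin t) ℝ} (hD : L t 1 D) (hB : L t 0 B)
    (hB' : L t 0 B') {d : ℕ} (h : L t d (B - B')) :
    L t (d + 1) (Phi μ D B - Phi μ D B') := by
  intro i j hij
  have h1 := P_int μ K hK hKc hD hB i j
  have h2 := P_int μ K hK hKc hD hB' i j
  have h3 : ∀ x, P D B x i j - P D B' x i j = -(B i j - B' i j) := by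
    intro x
    have := diff_low hD hB hB' x h i j hij
    simp only [Matrix.add_apply, Matrix.sub_apply] at this
    linarith
  have h4 := integral_sub h1 h2
  simp only [h3, integral_const, probReal_univ, one_smul] at h4
  simp only [Matrix.sub_apply, Phi]
  linarith

end Stmt8

open Stmt8 in
theorem stmt8 (μ : Measure ℝ) [IsProbabilityMeasure μ]
    (K : Set ℝ) (hK : IsCompact K) (hKc : μ Kᶜ = 0)
    (t : ℕ) (ht : 1 ≤ t)
    (D : Matrix (Fin t) (Fin t) ℝ)
    (hD : ∀ i j : Fin t, i ≤ j → D i j = 0) :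
    ∃! B : Matrix (Fin t) (Fin t) ℝ,
      (∀ i j : Fin t, i < j → B i j = 0) ∧
      ∀ i j : Fin t,
        (∫ x, (((1 : Matrix (Fin t) (Fin t) ℝ) - x • D + B * D)⁻¹ *
            (x • (1 : Matrix (Fin t) (Fin t) ℝ) - B)) i j ∂μ) = 0 := by
  have hD' : L t 1 D := fun i j h => hD i j (by rw [Fin.le_def]; omega)
  have hlow : ∀ n, L t 0 ((Phi μ D)^[n] 0) := by
    intro n
    induction n with
    | zero => intro i j _; rfl
    | succ n ih => rw [Function.iterate_succ_apply']; exact Phi_low μ hD' ih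
  have hconv : ∀ n, L t n ((Phi μ D)^[n + 1] 0 - (Phi μ D)^[n] 0) := by
    intro n
    induction n with
    | zero => exact (hlow 1).sub (hlow 0)
    | succ n ih =>
      have := Phi_diff μ K hK hKc hD' (hlow (n + 1)) (hlow n) ih
      rwa [← Function.iterate_succ_apply' (Phi μ D), ← Function.iterate_succ_apply' (Phi μ D)]
        at this
  refine ⟨(Phi μ D)^[t] 0, ⟨fun i j h => hlow t i j (by simpa using h), ?_⟩, ?_⟩
  · intro i j
    have h := (hconv t).eq_zero
    rw [Function.iterate_succ_apply'] at h
    have h2 := congrFun (congrFun h i) j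
    simp only [Matrix.sub_apply, Phi, add_sub_cancel_left] at h2
    exact h2
  · rintro B ⟨hB, hI⟩
    have hB' : L t 0 B := fun i j h => hB i j (by rw [Fin.lt_def]; omega)
    have hfix : Phi μ D B = B := by
      ext i j
      have : ∫ x, P D B x i j ∂μ = 0 := hI i j
      simp [Phi, this]
    have hall : ∀ n, L t n (B - (Phi μ D)^[n] 0) := by
      intro n
      induction n with
      | zero => exact hB'.sub (hlow 0)
      | succ n ih =>
        have := Phi_diff μ K hK hKc hD' hB' (hlow n) ih
        rwa [hfix, ← Function.iterate_succ_apply' (Phi μ D)] at this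
    exact sub_eq_zero.mp (hall t).eq_zero
end

section
/- Let μ be a compactly supported Borel probability measure on ℝ and let (Q_n)_{n≥0}, (q_n)_{n≥0} be defined from μ as in the context. Fix t ≥ 1, let D ∈ ℝ^{t×t} be strictly lower triangular, and set B := Σ_{i=1}^{t} q_i·D^{i−1} (with D^0 := I_t). Then: (a) for every λ ∈ ℝ, (I_t − λ·D + B·D)·(Σ_{i=1}^{t} Q_i(λ)·D^{i−1}) = λ·I_t − B, and hence (I_t − λ·D + B·D)^{−1}·(λ·I_t − B) = Σ_{i=1}^{t} Q_i(λ)·D^{i−1}; (b) ∫ Q_n(λ) dμ(λ) = 0 for every n ≥ 1, so that ∫ (I_t − λ·D + B·D)^{−1}·(λ·I_t − B) dμ(λ) = 0 entrywise. -/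
open MeasureTheory

lemma aux_pow {t : ℕ} (D : Matrix (Fin t) (Fin t) ℝ)
    (hD : ∀ i j : Fin t, i ≤ j → D i j = 0) (k : ℕ) :
    ∀ i j : Fin t, (i : ℕ) < j + k → (D ^ k) i j = 0 := by
  induction k with
  | zero =>
    intro i j h
    rw [pow_zero, Matrix.one_apply_ne]
    intro h'
    subst h'
    omega
  | succ k ih =>
    intro i j h
    rw [pow_succ, Matrix.mul_apply]
    apply Finset.sum_eq_zero
    intro l _
    by_cases hl : l ≤ j
    · rw [hD l j hl, mul_zero]
    · rw [ih i l (by simp only [Fin.le_def] at hl; omega), zero_mul]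

lemma aux_pow_t {t : ℕ} (D : Matrix (Fin t) (Fin t) ℝ)
    (hD : ∀ i j : Fin t, i ≤ j → D i j = 0) : D ^ t = 0 := by
  ext i j
  exact aux_pow D hD t i j (by omega)

/-- Evaluation of truncated power series at a nilpotent matrix. -/
noncomputable def aux_ev {t : ℕ} (D : Matrix (Fin t) (Fin t) ℝ) (f : PowerSeries ℝ) :
    Matrix (Fin t) (Fin t) ℝ := Polynomial.aeval D (PowerSeries.trunc t f)

lemma aux_ev_eq {t : ℕ} (D : Matrix (Fin t) (Fin t) ℝ) (f : PowerSeries ℝ) :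
    aux_ev D f = ∑ i ∈ Finset.range t, PowerSeries.coeff i f • D ^ i := by
  unfold aux_ev
  have h : PowerSeries.trunc t f =
      ∑ i ∈ Finset.range t, Polynomial.monomial i (PowerSeries.coeff i f) := by
    ext m
    simp [PowerSeries.coeff_trunc, Polynomial.finsetSum_coeff, Polynomial.coeff_monomial]
  rw [h, map_sum]
  simp [Polynomial.aeval_monomial, Algebra.smul_def]

lemma aux_ev_coe {t : ℕ} (D : Matrix (Fin t) (Fin t) ℝ) (h : D ^ t = 0) (p : Polynomial ℝ) :
    aux_ev D (p : PowerSeries ℝ) = Polynomial.aeval D p := by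
  rw [aux_ev_eq, Polynomial.aeval_eq_sum_range' (n := max t (p.natDegree + 1)) (by omega)]
  apply Finset.sum_subset_zero_on_sdiff
  · intro i; simp only [Finset.mem_range]; omega
  · intro i hi
    simp only [Finset.mem_sdiff, Finset.mem_range, not_lt] at hi
    rw [pow_eq_zero_of_le hi.2 h, smul_zero]
  · intro i _
    simp

lemma aux_ev_mul {t : ℕ} (D : Matrix (Fin t) (Fin t) ℝ) (h : D ^ t = 0) (f g : PowerSeries ℝ) :
    aux_ev D (f * g) = aux_ev D f * aux_ev D g := by
  have h1 : aux_ev D (f * g) =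
      aux_ev D ((PowerSeries.trunc t f * PowerSeries.trunc t g : Polynomial ℝ) : PowerSeries ℝ) := by
    unfold aux_ev
    rw [Polynomial.coe_mul, PowerSeries.trunc_trunc_mul_trunc]
  rw [h1, aux_ev_coe D h, map_mul]
  rfl

lemma aux_ev_add {t : ℕ} (D : Matrix (Fin t) (Fin t) ℝ) (f g : PowerSeries ℝ) :
    aux_ev D (f + g) = aux_ev D f + aux_ev D g := by
  simp [aux_ev]

lemma aux_ev_sub {t : ℕ} (D : Matrix (Fin t) (Fin t) ℝ) (f g : PowerSeries ℝ) :
    aux_ev D (f - g) = aux_ev D f - aux_ev D g := by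
  simp [aux_ev]

lemma aux_series (a q : ℕ → ℝ) (x : ℝ) (h0 : a 0 = 1)
    (hrec : ∀ n, a (n + 1) = x * a n - ∑ i ∈ Finset.range (n + 1), q (i + 1) * a (n - i)) :
    (1 - PowerSeries.C x * PowerSeries.X
        + PowerSeries.mk (fun i => q (i + 1)) * PowerSeries.X) *
      PowerSeries.mk (fun i => a (i + 1)) =
    PowerSeries.C x - PowerSeries.mk (fun i => q (i + 1)) := by
  have hre : (1 - PowerSeries.C x * PowerSeries.X
        + PowerSeries.mk (fun i => q (i + 1)) * PowerSeries.X) *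
      PowerSeries.mk (fun i => a (i + 1)) = PowerSeries.mk (fun i => a (i + 1))
       - PowerSeries.C x * (PowerSeries.mk (fun i => a (i + 1)) * PowerSeries.X)
       + (PowerSeries.mk (fun i => q (i + 1)) * PowerSeries.mk (fun i => a (i + 1)))
          * PowerSeries.X := by ring
  rw [hre]
  ext n
  rcases n with _ | n
  · have := hrec 0
    simp [h0] at this
    simp [this]
  · have := hrec (n + 1)
    rw [Finset.sum_range_succ] at this
    simp only [map_add, map_sub, PowerSeries.coeff_succ_mul_X, PowerSeries.coeff_C_mul,
      PowerSeries.coeff_mk, PowerSeries.coeff_C]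
    rw [PowerSeries.coeff_mul]
    simp only [PowerSeries.coeff_mk]
    rw [Finset.Nat.sum_antidiagonal_eq_sum_range_succ (fun i j => q (i + 1) * a (j + 1))]
    have h2 : ∑ i ∈ Finset.range (n + 1), q (i + 1) * a (n + 1 - i)
        = ∑ i ∈ Finset.range n.succ, q (i + 1) * a (n - i + 1) := by
      apply Finset.sum_congr rfl
      intro i hi
      rw [Finset.mem_range] at hi
      rw [show n + 1 - i = n - i + 1 by omega]
    rw [h2] at this
    simp only [Nat.sub_self, h0] at this
    rw [this]
    simp

theorem stmt9 (μ : Measure ℝ) [IsProbabilityMeasure μ]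
    (K : Set ℝ) (hK : IsCompact K) (hKc : μ Kᶜ = 0)
    (Q : ℕ → Polynomial ℝ) (q : ℕ → ℝ)
    (hQ0 : Q 0 = 1) (hq0 : q 0 = 1)
    (hq : ∀ n : ℕ, 1 ≤ n → q n = ∫ x, x * (Q (n - 1)).eval x ∂μ)
    (hQrec : ∀ n : ℕ, 1 ≤ n →
      Q n = Polynomial.X * Q (n - 1) - ∑ i ∈ Finset.Icc 1 n, Polynomial.C (q i) * Q (n - i))
    (t : ℕ) (ht : 1 ≤ t)
    (D : Matrix (Fin t) (Fin t) ℝ)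
    (hD : ∀ i j : Fin t, i ≤ j → D i j = 0)
    (B : Matrix (Fin t) (Fin t) ℝ)
    (hB : B = ∑ i ∈ Finset.range t, q (i + 1) • D ^ i) :
    (∀ x : ℝ,
        ((1 : Matrix (Fin t) (Fin t) ℝ) - x • D + B * D) *
            (∑ i ∈ Finset.range t, (Q (i + 1)).eval x • D ^ i) =
          x • (1 : Matrix (Fin t) (Fin t) ℝ) - B) ∧
    (∀ x : ℝ,
        ((1 : Matrix (Fin t) (Fin t) ℝ) - x • D + B * D)⁻¹ *
            (x • (1 : Matrix (Fin t) (Fin t) ℝ) - B) =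
          ∑ i ∈ Finset.range t, (Q (i + 1)).eval x • D ^ i) ∧
    (∀ n : ℕ, 1 ≤ n → (∫ x, (Q n).eval x ∂μ) = 0) ∧
    (∀ i j : Fin t,
        (∫ x, (((1 : Matrix (Fin t) (Fin t) ℝ) - x • D + B * D)⁻¹ *
            (x • (1 : Matrix (Fin t) (Fin t) ℝ) - B)) i j ∂μ) = 0) := by
  have hDt := aux_pow_t D hD
  have hint : ∀ p : Polynomial ℝ, Integrable (fun x => p.eval x) μ := by
    intro p
    have h1 : μ.restrict K = μ := Measure.restrict_eq_self_of_ae_mem (by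
      rw [ae_iff]; exact hKc)
    rw [← h1]
    exact (p.continuous.continuousOn).integrableOn_compact hK
  have hrec' : ∀ n, Q (n + 1) = Polynomial.X * Q n -
      ∑ i ∈ Finset.range (n + 1), Polynomial.C (q (i + 1)) * Q (n - i) := by
    intro n
    rw [hQrec (n + 1) (by omega)]
    have h3 : ∑ i ∈ Finset.Icc 1 (n + 1), Polynomial.C (q i) * Q (n + 1 - i) =
        ∑ i ∈ Finset.range (n + 1), Polynomial.C (q (i + 1)) * Q (n - i) := by
      rw [← Finset.Ico_add_one_right_eq_Icc, Finset.sum_Ico_eq_sum_range]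
      apply Finset.sum_congr (by simp)
      intro i _
      rw [show n + 1 - (1 + i) = n - i by omega, add_comm 1 i]
    rw [h3, Nat.add_sub_cancel]
  have hA : ∀ x : ℝ,
        ((1 : Matrix (Fin t) (Fin t) ℝ) - x • D + B * D) *
            (∑ i ∈ Finset.range t, (Q (i + 1)).eval x • D ^ i) =
          x • (1 : Matrix (Fin t) (Fin t) ℝ) - B := by
    intro x
    have hs := congrArg (aux_ev D) (aux_series (fun n => (Q n).eval x) q x (by simp [hQ0]) (by
      intro n
      simp only [hrec' n, Polynomial.eval_sub, Polynomial.eval_mul, Polynomial.eval_X,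
        Polynomial.eval_finsetSum, Polynomial.eval_C]))
    have hX : aux_ev D PowerSeries.X = D := by
      rw [← Polynomial.coe_X, aux_ev_coe D hDt, Polynomial.aeval_X]
    have hC : aux_ev D (PowerSeries.C x) = x • (1 : Matrix (Fin t) (Fin t) ℝ) := by
      rw [← Polynomial.coe_C, aux_ev_coe D hDt, Polynomial.aeval_C, Algebra.algebraMap_eq_smul_one]
    have h1 : aux_ev D 1 = 1 := by
      rw [← Polynomial.coe_one, aux_ev_coe D hDt, map_one]
    have hq' : aux_ev D (PowerSeries.mk (fun i => q (i + 1))) = B := by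
      rw [aux_ev_eq, hB]; simp
    have hQ' : aux_ev D (PowerSeries.mk (fun i => (Q (i + 1)).eval x)) =
        ∑ i ∈ Finset.range t, (Q (i + 1)).eval x • D ^ i := by
      rw [aux_ev_eq]; simp
    simp only [aux_ev_mul D hDt, aux_ev_add, aux_ev_sub, hX, hC, h1, hq', hQ', smul_mul_assoc,
      one_mul] at hs
    exact hs
  have hcomm : Commute B D := by
    rw [hB]
    apply Commute.sum_left
    intro i _
    exact ((Commute.refl D).pow_left i).smul_left _
  have hInv : ∀ x : ℝ,
        ((1 : Matrix (Fin t) (Fin t) ℝ) - x • D + B * D)⁻¹ *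
            (x • (1 : Matrix (Fin t) (Fin t) ℝ) - B) =
          ∑ i ∈ Finset.range t, (Q (i + 1)).eval x • D ^ i := by
    intro x
    have hu : IsUnit ((1 : Matrix (Fin t) (Fin t) ℝ) - x • D + B * D) := by
      have he : (1 : Matrix (Fin t) (Fin t) ℝ) - x • D + B * D
          = 1 + (B - x • (1 : Matrix (Fin t) (Fin t) ℝ)) * D := by
        rw [sub_mul, smul_mul_assoc, one_mul]; abel
      rw [he]
      apply IsNilpotent.isUnit_one_add
      have hc : Commute (B - x • (1 : Matrix (Fin t) (Fin t) ℝ)) D :=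
        hcomm.sub_left ((Commute.one_left D).smul_left x)
      exact ⟨t, by rw [hc.mul_pow, hDt, mul_zero]⟩
    rw [← hA x, Matrix.nonsing_inv_mul_cancel_left _ _ ((Matrix.isUnit_iff_isUnit_det _).1 hu)]
  have hZ : ∀ n : ℕ, (∫ x, (Q (n + 1)).eval x ∂μ) = 0 := by
    intro n
    induction n using Nat.strong_induction_on with
    | _ n ih =>
      have e : ∀ x, (Q (n + 1)).eval x = (Polynomial.X * Q n).eval x -
          ∑ i ∈ Finset.range (n + 1), q (i + 1) * (Q (n - i)).eval x := by
        intro x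
        rw [hrec' n]
        simp [Polynomial.eval_finsetSum]
      simp_rw [e]
      rw [integral_sub (hint _) (integrable_finsetSum _ fun i _ => (hint _).const_mul _),
        integral_finsetSum _ fun i _ => (hint _).const_mul _, Finset.sum_range_succ,
        Finset.sum_eq_zero]
      · simp [hQ0, hq (n + 1) (by omega)]
      · intro i hi
        rw [Finset.mem_range] at hi
        rw [integral_const_mul, show n - i = (n - i - 1) + 1 by omega, ih _ (by omega), mul_zero]
  refine ⟨hA, hInv, ?_, ?_⟩
  · intro n hn
    obtain ⟨m, rfl⟩ := Nat.exists_eq_add_of_le' hn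
    exact hZ m
  · intro i j
    simp_rw [hInv, Matrix.sum_apply, Matrix.smul_apply, smul_eq_mul]
    rw [integral_finsetSum _ fun k _ => (hint _).mul_const _]
    apply Finset.sum_eq_zero
    intro k _
    rw [integral_mul_const, hZ, zero_mul]
end

section
/- Let μ be a compactly supported Borel probability measure on ℝ with moments m_k := ∫ λ^k dμ(λ). Suppose (κ_i)_{i≥1} is a sequence of real numbers satisfying the moment–cumulant relations m_k = Σ_{π ∈ NC(k)} ∏_{B ∈ π} κ_{|B|} for every k ≥ 1. Then for every t ≥ 1 and every strictly lower triangular D ∈ ℝ^{t×t}, the lower triangular matrix B := Σ_{i=1}^{t} κ_i·D^{i−1} (with D^0 := I_t) satisfies ∫ (I_t − λ·D + B·D)^{−1}·(λ·I_t − B) dμ(λ) = 0 entrywise. -/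
open MeasureTheory

namespace NCProof

open Finset

/-- Weights of partial configurations: `n` elements to come, `h` open elements. -/
noncomputable def f (κ : ℕ → ℝ) : ℕ → ℕ → ℝ
  | 0, h => if h = 0 then 1 else 0
  | n + 1, h => f κ n (h + 1) + ∑ s ∈ Finset.range (h + 1), κ (s + 1) * f κ n (h - s)

/-- Non-crossing families of blocks partitioning `P ∪ Q`, each block meeting `Q`. -/
structure Good {α : Type*} [LinearOrder α] (P Q : Finset α) (S : Finset (Finset α)) : Prop where
  sub : ∀ B ∈ S, ∀ x ∈ B, x ∈ P ∨ x ∈ Q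
  cover : ∀ x, x ∈ P ∨ x ∈ Q → ∃ B ∈ S, x ∈ B
  uniq : ∀ B ∈ S, ∀ B' ∈ S, ∀ x, x ∈ B → x ∈ B' → B = B'
  meets : ∀ B ∈ S, ∃ x ∈ B, x ∈ Q
  nc : ∀ a b c d : α, a < b → b < c → c < d →
    ∀ B₁ ∈ S, ∀ B₂ ∈ S, a ∈ B₁ → c ∈ B₁ → b ∈ B₂ → d ∈ B₂ → B₁ = B₂

open Classical in
/-- Total weight. -/
noncomputable def G {α : Type*} [LinearOrder α] [Fintype α] (κ : ℕ → ℝ) (P Q : Finset α) : ℝ :=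
  ∑ S ∈ (Finset.univ : Finset (Finset (Finset α))).filter (Good P Q), ∏ B ∈ S, κ B.card

theorem sum_tops {α : Type*} [LinearOrder α] (g : ℕ → ℝ) (P : Finset α) :
    ∑ a ∈ P, g (P.filter (a ≤ ·)).card = ∑ s ∈ Finset.range P.card, g (s + 1) := by
  induction P using Finset.induction_on_min with
  | empty => simp
  | insert a P h ih =>
    have ha : a ∉ P := fun h' => lt_irrefl _ (h a h')
    rw [Finset.sum_insert ha, Finset.card_insert_of_notMem ha, Finset.sum_range_succ, ← ih, add_comm]
    congr 1
    · refine Finset.sum_congr rfl fun b hb => ?_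
      congr 2
      ext x
      have := h b hb
      simp only [mem_filter, mem_insert]
      constructor
      · rintro ⟨rfl | h1, h2⟩
        · exact absurd h2 (not_le.2 this)
        · exact ⟨h1, h2⟩
      · rintro ⟨h1, h2⟩; exact ⟨Or.inr h1, h2⟩
    · congr 1
      rw [Finset.filter_true_of_mem, Finset.card_insert_of_notMem ha]
      intro x hx
      rcases Finset.mem_insert.1 hx with rfl | hx
      · exact le_rfl
      · exact (h x hx).le

section
variable {α : Type*} [LinearOrder α] {P Q : Finset α} {q : α}

theorem good_of_good (hq : q ∈ Q) {S : Finset (Finset α)}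
    (h : Good (insert q P) (Q.erase q) S) : Good P Q S where
  sub B hB x hx := by
    have := h.sub B hB x hx
    grind
  cover x hx := h.cover x (by grind)
  uniq := h.uniq
  meets B hB := by
    obtain ⟨x, hx, hx'⟩ := h.meets B hB
    exact ⟨x, hx, Finset.mem_of_mem_erase hx'⟩
  nc := h.nc

theorem good_insert (hP : ∀ p ∈ P, p < q) (hq : q ∈ Q) (hQ : ∀ x ∈ Q, q ≤ x) {a : α}
    (ha : a ∈ insert q P) {S : Finset (Finset α)}
    (h : Good ((insert q P) \ (insert q P).filter (a ≤ ·)) (Q.erase q) S) :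
    Good P Q (insert ((insert q P).filter (a ≤ ·)) S) := by
  set I := (insert q P).filter (a ≤ ·) with hI
  have hmem : ∀ x, x ∈ I ↔ (x = q ∨ x ∈ P) ∧ a ≤ x := by intro x; simp [hI]
  have haq : a ≤ q := by
    rcases Finset.mem_insert.1 ha with rfl | h
    · exact le_rfl
    · exact (hP _ h).le
  have hqI : q ∈ I := (hmem q).2 ⟨Or.inl rfl, haq⟩
  have hdis : ∀ B ∈ S, ∀ x ∈ B, x ∉ I := by
    intro B hB x hx hxI
    rcases h.sub B hB x hx with h1 | h1
    · exact (Finset.mem_sdiff.1 h1).2 hxI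
    · have h2 := Finset.mem_erase.1 h1
      rcases ((hmem x).1 hxI).1 with h3 | h3
      · exact h2.1 h3
      · exact absurd (hP x h3) (not_lt.2 (hQ x h2.2))
  have hle : ∀ x ∈ I, x ≤ q := by
    intro x hx
    rcases ((hmem x).1 hx).1 with h3 | h3
    · exact h3.le
    · exact (hP x h3).le
  have hconv : ∀ x ∈ I, ∀ z ∈ I, ∀ y, x < y → y < z → ∀ B ∈ S, y ∉ B := by
    intro x hx z hz y hxy hyz B hB hy
    refine hdis B hB y hy ((hmem y).2 ⟨?_, ((hmem x).1 hx).2.trans hxy.le⟩)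
    have hyq : y < q := hyz.trans_le (hle z hz)
    rcases h.sub B hB y hy with h1 | h1
    · simpa using (Finset.mem_sdiff.1 h1).1
    · exact absurd hyq (not_lt.2 (hQ y (Finset.mem_of_mem_erase h1)))
  constructor
  · intro B hB x hx
    rcases Finset.mem_insert.1 hB with rfl | hB
    · rcases ((hmem x).1 hx).1 with rfl | h3
      · exact Or.inr hq
      · exact Or.inl h3
    · have := h.sub B hB x hx
      grind
  · intro x hx
    by_cases hxI : x ∈ I
    · exact ⟨I, Finset.mem_insert_self _ _, hxI⟩
    · obtain ⟨B, hB, hxB⟩ := h.cover x (by grind)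
      exact ⟨B, Finset.mem_insert_of_mem hB, hxB⟩
  · intro B hB B' hB' x hx hx'
    rcases Finset.mem_insert.1 hB with rfl | hB <;> rcases Finset.mem_insert.1 hB' with rfl | hB'
    · rfl
    · exact absurd hx (hdis _ hB' _ hx')
    · exact absurd hx' (hdis _ hB _ hx)
    · exact h.uniq B hB B' hB' x hx hx'
  · intro B hB
    rcases Finset.mem_insert.1 hB with rfl | hB
    · exact ⟨q, hqI, hq⟩
    · obtain ⟨x, hx, hx'⟩ := h.meets B hB
      exact ⟨x, hx, Finset.mem_of_mem_erase hx'⟩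
  · intro x y z w hxy hyz hzw B₁ h1 B₂ h2 hx hz hy hw
    rcases Finset.mem_insert.1 h1 with rfl | h1 <;> rcases Finset.mem_insert.1 h2 with rfl | h2
    · rfl
    · exact absurd hy (hconv _ hx _ hz _ hxy hyz _ h2)
    · exact absurd hz (hconv _ hy _ hw _ hyz hzw _ h1)
    · exact h.nc x y z w hxy hyz hzw B₁ h1 B₂ h2 hx hz hy hw

theorem exists_of_good (hP : ∀ p ∈ P, p < q) (hq : q ∈ Q) (hQ : ∀ x ∈ Q, q ≤ x)
    {S : Finset (Finset α)} (h : Good P Q S) (h' : ¬ Good (insert q P) (Q.erase q) S) :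
    ∃ a ∈ insert q P, (insert q P).filter (a ≤ ·) ∈ S ∧
      Good ((insert q P) \ (insert q P).filter (a ≤ ·)) (Q.erase q)
        (S.erase ((insert q P).filter (a ≤ ·))) := by
  have hex : ∃ I ∈ S, ∀ x ∈ I, x ∉ Q.erase q := by
    by_contra! hcon
    refine h' ⟨?_, ?_, h.uniq, hcon, h.nc⟩
    · intro B hB x hx
      have := h.sub B hB x hx
      grind
    · intro x hx
      exact h.cover x (by grind)
  obtain ⟨I, hIS, hI⟩ := hex
  have hqI : q ∈ I := by
    obtain ⟨x, hx, hxQ⟩ := h.meets I hIS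
    have := hI x hx
    grind
  have hIP : ∀ x ∈ I, x ∈ insert q P := by
    intro x hx
    have := hI x hx
    have := h.sub I hIS x hx
    grind
  have hne : I.Nonempty := ⟨q, hqI⟩
  have haI := I.min'_mem hne
  set a := I.min' hne with ha
  have hIa : I = (insert q P).filter (a ≤ ·) := by
    ext y
    rw [Finset.mem_filter]
    constructor
    · intro hy
      exact ⟨hIP y hy, I.min'_le y hy⟩
    · rintro ⟨hy, hay⟩
      rcases Finset.mem_insert.1 hy with rfl | hyP
      · exact hqI
      rcases hay.eq_or_lt with hay | hay
      · rw [← hay]; exact haI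
      obtain ⟨J, hJ, hyJ⟩ := h.cover y (Or.inl hyP)
      obtain ⟨d, hd, hdQ⟩ := h.meets J hJ
      rcases (hQ d hdQ).eq_or_lt with hqd | hqd
      · have := h.uniq I hIS J hJ q hqI (hqd ▸ hd)
        rw [this]; exact hyJ
      · have := h.nc a y q d hay (hP y hyP) hqd I hIS J hJ haI hqI hyJ hd
        rw [this]; exact hyJ
  refine ⟨a, hIP a haI, hIa ▸ hIS, ?_⟩
  rw [← hIa]
  constructor
  · intro B hB x hx
    have hB' := Finset.mem_erase.1 hB
    have := h.sub B hB'.2 x hx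
    have hxI : x ∉ I := fun hxI => hB'.1 (h.uniq B hB'.2 I hIS x hx hxI)
    grind
  · intro x hx
    have hxI : x ∉ I := by
      have := hI x
      grind
    obtain ⟨B, hB, hxB⟩ := h.cover x (by grind)
    exact ⟨B, Finset.mem_erase.2 ⟨fun e => hxI (e ▸ hxB), hB⟩, hxB⟩
  · intro B hB B' hB'
    exact h.uniq B (Finset.mem_of_mem_erase hB) B' (Finset.mem_of_mem_erase hB')
  · intro B hB
    have hB' := Finset.mem_erase.1 hB
    obtain ⟨x, hx, hxQ⟩ := h.meets B hB'.2
    refine ⟨x, hx, Finset.mem_erase.2 ⟨?_, hxQ⟩⟩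
    rintro rfl
    exact hB'.1 (h.uniq B hB'.2 I hIS x hx hqI)
  · intro x y z w hxy hyz hzw B₁ h1 B₂ h2
    exact h.nc x y z w hxy hyz hzw B₁ (Finset.mem_of_mem_erase h1) B₂ (Finset.mem_of_mem_erase h2)

theorem mem_top (hP : ∀ p ∈ P, p < q) {a : α} (ha : a ∈ insert q P) :
    q ∈ (insert q P).filter (a ≤ ·) := by
  rw [Finset.mem_filter]
  refine ⟨Finset.mem_insert_self _ _, ?_⟩
  rcases Finset.mem_insert.1 ha with rfl | h
  · exact le_rfl
  · exact (hP _ h).le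

theorem top_notMem (hP : ∀ p ∈ P, p < q) {a : α}
    (ha : a ∈ insert q P) {S : Finset (Finset α)}
    (h : Good ((insert q P) \ (insert q P).filter (a ≤ ·)) (Q.erase q) S) :
    ∀ B ∈ S, q ∉ B := by
  intro B hB hqB
  have := mem_top hP ha
  rcases h.sub B hB q hqB with h1 | h1
  · exact (Finset.mem_sdiff.1 h1).2 this
  · simp at h1

theorem top_inj {a b : α} (ha : a ∈ insert q P) (hb : b ∈ insert q P)
    (h : (insert q P).filter (a ≤ ·) = (insert q P).filter (b ≤ ·)) : a = b := by
  have h1 : a ∈ (insert q P).filter (b ≤ ·) := h ▸ Finset.mem_filter.2 ⟨ha, le_rfl⟩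
  have h2 : b ∈ (insert q P).filter (a ≤ ·) := h ▸ Finset.mem_filter.2 ⟨hb, le_rfl⟩
  exact le_antisymm (Finset.mem_filter.1 h2).2 (Finset.mem_filter.1 h1).2

open Classical in
theorem G_step [Fintype α] (κ : ℕ → ℝ) (hP : ∀ p ∈ P, p < q) (hq : q ∈ Q) (hQ : ∀ x ∈ Q, q ≤ x) :
    G κ P Q = G κ (insert q P) (Q.erase q) + ∑ a ∈ insert q P,
      κ ((insert q P).filter (a ≤ ·)).card *
        G κ ((insert q P) \ (insert q P).filter (a ≤ ·)) (Q.erase q) := by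
  unfold G
  rw [← Finset.sum_filter_add_sum_filter_not _ (Good (insert q P) (Q.erase q))]
  congr 1
  · refine Finset.sum_congr ?_ fun _ _ => rfl
    ext S
    simp only [mem_filter, mem_univ, true_and]
    exact ⟨fun h => h.2, fun h => ⟨good_of_good hq h, h⟩⟩
  · simp_rw [Finset.mul_sum]
    rw [Finset.sum_sigma']
    symm
    refine Finset.sum_bij (fun x _ => insert ((insert q P).filter (x.1 ≤ ·)) x.2) ?_ ?_ ?_ ?_
    · rintro ⟨a, S⟩ hx
      simp only [mem_sigma, mem_filter, mem_univ, true_and] at hx ⊢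
      refine ⟨good_insert hP hq hQ hx.1 hx.2, fun hg => ?_⟩
      obtain ⟨x, hx1, hx2⟩ := hg.meets _ (Finset.mem_insert_self _ _)
      have h1 := (Finset.mem_filter.1 hx1).1
      have h2 := Finset.mem_erase.1 hx2
      rcases Finset.mem_insert.1 h1 with h3 | h3
      · exact h2.1 h3
      · exact absurd (hP x h3) (not_lt.2 (hQ x h2.2))
    · rintro ⟨a, S⟩ hx ⟨b, T⟩ hy hxy
      simp only [mem_sigma, mem_filter, mem_univ, true_and] at hx hy hxy
      have hS := top_notMem hP hx.1 hx.2
      have hT := top_notMem hP hy.1 hy.2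
      have hqa := mem_top hP hx.1
      have hqb := mem_top hP hy.1
      have e : (insert q P).filter (a ≤ ·) = (insert q P).filter (b ≤ ·) := by
        have : (insert q P).filter (a ≤ ·) ∈ insert ((insert q P).filter (b ≤ ·)) T := by
          rw [← hxy]; exact Finset.mem_insert_self _ _
        rcases Finset.mem_insert.1 this with h | h
        · exact h
        · exact absurd hqa (hT _ h)
      have hab := top_inj hx.1 hy.1 e
      subst hab
      have : S = T := by
        rw [← Finset.erase_insert (fun h => hS _ h hqa), hxy,
          Finset.erase_insert (fun h => hT _ h hqb)]
      rw [this]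
    · intro S hS
      simp only [mem_filter, mem_univ, true_and] at hS
      obtain ⟨a, ha, haS, hg⟩ := exists_of_good hP hq hQ hS.1 hS.2
      refine ⟨⟨a, _⟩, ?_, Finset.insert_erase haS⟩
      simp only [mem_sigma, mem_filter, mem_univ, true_and]
      exact ⟨ha, hg⟩
    · rintro ⟨a, S⟩ hx
      simp only [mem_sigma, mem_filter, mem_univ, true_and] at hx ⊢
      rw [Finset.prod_insert (fun h => top_notMem hP hx.1 hx.2 _ h (mem_top hP hx.1))]

theorem G_eq [Fintype α] (κ : ℕ → ℝ) (n : ℕ) : ∀ P Q : Finset α, Q.card = n →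
    (∀ p ∈ P, ∀ x ∈ Q, p < x) → G κ P Q = f κ n P.card := by
  classical
  induction n with
  | zero =>
    intro P Q hn _
    rw [Finset.card_eq_zero] at hn
    subst hn
    have key : ∀ S : Finset (Finset α), Good P ∅ S ↔ P = ∅ ∧ S = ∅ := by
      intro S
      constructor
      · intro h
        have hS : S = ∅ := by
          rw [Finset.eq_empty_iff_forall_notMem]
          intro B hB
          obtain ⟨x, _, hx⟩ := h.meets B hB
          simp at hx
        refine ⟨?_, hS⟩
        rw [Finset.eq_empty_iff_forall_notMem]
        intro x hx
        obtain ⟨B, hB, _⟩ := h.cover x (Or.inl hx)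
        simp [hS] at hB
      · rintro ⟨rfl, rfl⟩
        constructor <;> simp
    unfold G f
    simp only [key, Finset.card_eq_zero]
    by_cases h : P = ∅
    · simp [h, Finset.filter_eq']
    · simp [h]
  | succ n ih =>
    intro P Q hn hPQ
    have hne : Q.Nonempty := Finset.card_pos.1 (by omega)
    have hq := Q.min'_mem hne
    have hQ : ∀ x ∈ Q, Q.min' hne ≤ x := fun x hx => Q.min'_le x hx
    set q := Q.min' hne
    have hP : ∀ p ∈ P, p < q := fun p hp => hPQ p hp q hq
    have hqP : q ∉ P := fun h => lt_irrefl _ (hP q h)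
    have hcard : (Q.erase q).card = n := by rw [Finset.card_erase_of_mem hq]; omega
    have hlt : ∀ p ∈ insert q P, ∀ x ∈ Q.erase q, p < x := by
      intro p hp x hx
      have h2 := Finset.mem_erase.1 hx
      rcases Finset.mem_insert.1 hp with rfl | hp
      · exact lt_of_le_of_ne (hQ x h2.2) (Ne.symm h2.1)
      · exact hPQ p hp x h2.2
    rw [G_step κ hP hq hQ, ih _ _ hcard hlt, Finset.card_insert_of_notMem hqP, f]
    congr 1
    have := sum_tops (fun s => κ s * f κ n (P.card + 1 - s)) (insert q P)
    rw [Finset.card_insert_of_notMem hqP] at this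
    calc _ = _ := ?_
      _ = _ := this
      _ = _ := ?_
    · refine Finset.sum_congr rfl fun a _ => ?_
      rw [ih _ _ hcard (fun p hp => hlt p (Finset.mem_sdiff.1 hp).1),
        Finset.card_sdiff_of_subset (Finset.filter_subset _ _), Finset.card_insert_of_notMem hqP]
    · refine Finset.sum_congr rfl fun s _ => ?_
      simp

end

theorem moment_eq (κ : ℕ → ℝ) (k : ℕ) :
    (∑ᶠ π ∈ {π : Finpartition (Finset.univ : Finset (Fin k)) | IsNonCrossing π},
          ∏ B ∈ π.parts, κ B.card) = f κ k 0 := by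
  classical
  have h1 := G_eq κ k (∅ : Finset (Fin k)) Finset.univ (by simp) (by simp)
  rw [Finset.card_empty] at h1
  rw [← h1]
  have hset : {π : Finpartition (Finset.univ : Finset (Fin k)) | IsNonCrossing π} =
    ((Finset.univ.filter IsNonCrossing : Finset (Finpartition (Finset.univ : Finset (Fin k)))) :
      Set _) := by ext; simp
  rw [hset, finsum_mem_coe_finset]
  unfold G
  refine Finset.sum_bij (fun π _ => π.parts) ?_ ?_ ?_ ?_
  · intro π hπ
    simp only [mem_filter, mem_univ, true_and] at hπ ⊢
    refine ⟨by simp, ?_, ?_, ?_, hπ⟩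
    · intro x _
      exact π.exists_mem (Finset.mem_univ x)
    · intro B hB B' hB' x hx hx'
      exact π.eq_of_mem_parts hB hB' hx hx'
    · intro B hB
      obtain ⟨x, hx⟩ := π.nonempty_of_mem_parts hB
      exact ⟨x, hx, Finset.mem_univ x⟩
  · intro π _ π' _ h
    exact Finpartition.ext h
  · intro S hS
    simp only [mem_filter, mem_univ, true_and] at hS
    refine ⟨Finpartition.ofExistsUnique S (by simp) ?_ ?_, ?_, ?_⟩
    · intro x _
      obtain ⟨B, hB, hx⟩ := hS.cover x (by simp)
      exact ⟨B, ⟨hB, hx⟩, fun B' h' => hS.uniq _ h'.1 _ hB x h'.2 hx⟩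
    · intro h
      obtain ⟨x, hx, _⟩ := hS.meets _ h
      simp at hx
    · simp only [mem_filter, mem_univ, true_and]
      exact hS.nc
    · rfl
  · intro π _; rfl

section alg
open PowerSeries

/-- Generating series in the number of open elements. -/
noncomputable def F (κ : ℕ → ℝ) (n : ℕ) : PowerSeries ℝ := PowerSeries.mk (f κ n)

/-- The R-transform as a power series. -/
noncomputable def R (κ : ℕ → ℝ) : PowerSeries ℝ := PowerSeries.mk (fun i => κ (i + 1))

theorem F_rec (κ : ℕ → ℝ) (n : ℕ) :
    X * F κ (n + 1) = (1 + R κ * X) * F κ n - PowerSeries.C (f κ n 0) := by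
  ext h
  rw [show (1 + R κ * X) * F κ n = F κ n + X * (R κ * F κ n) by ring]
  cases h with
  | zero => simp [F]
  | succ h =>
    simp only [map_sub, map_add, PowerSeries.coeff_succ_X_mul, PowerSeries.coeff_C]
    simp only [F, R, PowerSeries.coeff_mk, PowerSeries.coeff_mul, f]
    rw [Finset.Nat.sum_antidiagonal_eq_sum_range_succ (fun i j => κ (i + 1) * f κ n j)]
    simp

theorem F_zero (κ : ℕ → ℝ) : F κ 0 = 1 := by
  ext h
  simp [F, f, PowerSeries.coeff_one]

theorem F_one (κ : ℕ → ℝ) : F κ 1 = R κ := by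
  have h := F_rec κ 0
  rw [F_zero] at h
  have : X * F κ 1 = X * R κ := by
    rw [h]; simp [f, mul_comm]
  exact mul_left_cancel₀ PowerSeries.X_ne_zero this

variable {A : Type*} [Ring A] [Algebra ℝ A]

/-- Evaluation of a power series at an element, truncated. -/
noncomputable def ev (t : ℕ) (D : A) (g : PowerSeries ℝ) : A := Polynomial.aeval D (trunc t g)

theorem ev_coe {t : ℕ} {D : A} (hD : D ^ t = 0) (p : Polynomial ℝ) :
    ev t D (p : PowerSeries ℝ) = Polynomial.aeval D p := by
  have : Polynomial.X ^ t ∣ p - trunc t (p : PowerSeries ℝ) := by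
    rw [Polynomial.X_pow_dvd_iff]
    intro d hd
    simp [PowerSeries.coeff_trunc, hd]
  obtain ⟨r, hr⟩ := this
  have h2 := congrArg (Polynomial.aeval D) hr
  rw [map_sub, map_mul, map_pow, Polynomial.aeval_X, hD, zero_mul, sub_eq_zero] at h2
  exact h2.symm

theorem ev_mul {t : ℕ} {D : A} (hD : D ^ t = 0) (g h : PowerSeries ℝ) :
    ev t D (g * h) = ev t D g * ev t D h := by
  unfold ev
  rw [← map_mul, ← ev_coe hD (trunc t g * trunc t h), ev, Polynomial.coe_mul,
    PowerSeries.trunc_trunc_mul_trunc]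

theorem ev_add (t : ℕ) (D : A) (g h : PowerSeries ℝ) :
    ev t D (g + h) = ev t D g + ev t D h := by
  simp [ev]

theorem ev_sub (t : ℕ) (D : A) (g h : PowerSeries ℝ) :
    ev t D (g - h) = ev t D g - ev t D h := by
  simp [ev]

theorem ev_X {t : ℕ} {D : A} (hD : D ^ t = 0) : ev t D X = D := by
  rw [← Polynomial.coe_X, ev_coe hD, Polynomial.aeval_X]

theorem ev_C {t : ℕ} {D : A} (hD : D ^ t = 0) (c : ℝ) :
    ev t D (PowerSeries.C c) = c • (1 : A) := by
  rw [← Polynomial.coe_C, ev_coe hD, Polynomial.aeval_C, Algebra.algebraMap_eq_smul_one]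

theorem ev_one {t : ℕ} {D : A} (hD : D ^ t = 0) : ev t D (1 : PowerSeries ℝ) = 1 := by
  rw [← Polynomial.coe_one, ev_coe hD, map_one]

theorem ev_R (t : ℕ) (D : A) (κ : ℕ → ℝ) :
    ev t D (R κ) = ∑ k ∈ Finset.range t, κ (k + 1) • D ^ k := by
  unfold ev
  have e : trunc t (R κ) = ∑ k ∈ Finset.range t, Polynomial.monomial k (κ (k + 1)) := by
    ext d
    simp [PowerSeries.coeff_trunc, R, Polynomial.finsetSum_coeff, Polynomial.coeff_monomial]
  rw [e, map_sum]
  refine Finset.sum_congr rfl fun k _ => ?_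
  simp [Polynomial.aeval_monomial, Algebra.smul_def]

/-- Algebraic core. -/
theorem core {t : ℕ} {D : A} (hD : D ^ t = 0) (κ : ℕ → ℝ) (Ci : A)
    (hC : Ci * (1 + ev t D (R κ) * D) = 1) (hW : (Ci * D) ^ t = 0) (j : ℕ) :
    ∑ n ∈ Finset.range t, f κ (n + j) 0 • ((Ci * D) ^ n * Ci) = ev t D (F κ j) := by
  have step : ∀ n, f κ n 0 • Ci = ev t D (F κ n) - (Ci * D) * ev t D (F κ (n + 1)) := by
    intro n
    have h := congrArg (ev t D) (F_rec κ n)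
    rw [ev_sub, ev_mul hD, ev_mul hD, ev_add, ev_mul hD, ev_X hD, ev_one hD, ev_C hD] at h
    rw [mul_assoc, h, mul_sub, ← mul_assoc, hC, one_mul, mul_smul_comm, mul_one, sub_sub_cancel]
  have tel : ∀ n, f κ (n + j) 0 • ((Ci * D) ^ n * Ci) =
      (Ci * D) ^ n * ev t D (F κ (n + j)) - (Ci * D) ^ (n + 1) * ev t D (F κ (n + 1 + j)) := by
    intro n
    rw [← mul_smul_comm, step, mul_sub, ← mul_assoc, ← pow_succ, show n + 1 + j = n + j + 1 by omega]
  rw [Finset.sum_congr rfl fun n _ => tel n, Finset.sum_range_sub', hW]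
  simp

end alg

theorem nilp {t : ℕ} (D : Matrix (Fin t) (Fin t) ℝ) (hD : ∀ i j : Fin t, i ≤ j → D i j = 0) :
    D ^ t = 0 := by
  have key : ∀ n : ℕ, ∀ i j : Fin t, (i : ℕ) < j + n → (D ^ n) i j = 0 := by
    intro n
    induction n with
    | zero =>
      intro i j h
      have : i ≠ j := by rintro rfl; simp at h
      simp [this]
    | succ n ih =>
      intro i j h
      rw [pow_succ, Matrix.mul_apply]
      refine Finset.sum_eq_zero fun l _ => ?_
      by_cases hl : (i : ℕ) < l + n
      · rw [ih i l hl, zero_mul]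
      · rw [hD l j (by rw [Fin.le_def]; omega), mul_zero]
  ext i j
  exact key t i j (by omega)

theorem integrable_pow (μ : Measure ℝ) [IsProbabilityMeasure μ]
    (K : Set ℝ) (hK : IsCompact K) (hKc : μ Kᶜ = 0) (k : ℕ) : Integrable (fun x : ℝ => x ^ k) μ := by
  have h : IntegrableOn (fun x : ℝ => x ^ k) K μ :=
    (continuous_pow k).continuousOn.integrableOn_compact hK
  have : μ.restrict K = μ := Measure.restrict_eq_self_of_ae_mem (by
    rw [ae_iff]; exact hKc)
  rwa [IntegrableOn, this] at h

end NCProof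

theorem stmt10 (μ : Measure ℝ) [IsProbabilityMeasure μ]
    (K : Set ℝ) (hK : IsCompact K) (hKc : μ Kᶜ = 0)
    (κ : ℕ → ℝ)
    (hκ : ∀ k : ℕ, 1 ≤ k →
      (∫ x, x ^ k ∂μ) =
        ∑ᶠ π ∈ {π : Finpartition (Finset.univ : Finset (Fin k)) | IsNonCrossing π},
          ∏ B ∈ π.parts, κ B.card) :
    ∀ t : ℕ, 1 ≤ t → ∀ D : Matrix (Fin t) (Fin t) ℝ,
      (∀ i j : Fin t, i ≤ j → D i j = 0) →
      ∀ i j : Fin t,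
        (∫ x, (((1 : Matrix (Fin t) (Fin t) ℝ) - x • D +
              (∑ k ∈ Finset.range t, κ (k + 1) • D ^ k) * D)⁻¹ *
            (x • (1 : Matrix (Fin t) (Fin t) ℝ) -
              ∑ k ∈ Finset.range t, κ (k + 1) • D ^ k)) i j ∂μ) = 0 := by
  intro t _ D hDl i j
  have hD := NCProof.nilp D hDl
  have hm : ∀ k, (∫ x, x ^ k ∂μ) = NCProof.f κ k 0 := by
    intro k
    rcases Nat.eq_zero_or_pos k with rfl | hk
    · simp [NCProof.f]
    · rw [hκ k hk, NCProof.moment_eq]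
  have hpow := NCProof.integrable_pow μ K hK hKc
  rw [← NCProof.ev_R]
  set B := NCProof.ev t D (NCProof.R κ) with hB
  have hcomm : Commute B D := by
    have h1 := NCProof.ev_mul hD (NCProof.R κ) PowerSeries.X
    have h2 := NCProof.ev_mul hD PowerSeries.X (NCProof.R κ)
    rw [NCProof.ev_X hD] at h1 h2
    rw [mul_comm] at h1
    exact h1.symm.trans h2
  have hnil : IsNilpotent (B * D) := ⟨t, by rw [hcomm.mul_pow, hD, mul_zero]⟩
  obtain ⟨u, hu⟩ := hnil.isUnit_one_add
  set Ci : Matrix (Fin t) (Fin t) ℝ := ↑u⁻¹ with hCi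
  have hC1 : Ci * (1 + B * D) = 1 := by rw [← hu, hCi]; simp
  have hC2 : (1 + B * D) * Ci = 1 := by rw [← hu, hCi]; simp
  have hcommC : Commute Ci D := by
    have : Commute (u : Matrix (Fin t) (Fin t) ℝ) D := by
      rw [hu]; exact (Commute.one_left D).add_left (hcomm.mul_left (Commute.refl D))
    exact this.units_inv_left
  have hW : (Ci * D) ^ t = 0 := by rw [hcommC.mul_pow, hD, mul_zero]
  have hc0 := NCProof.core hD κ Ci hC1 hW 0
  have hc1 := NCProof.core hD κ Ci hC1 hW 1
  rw [NCProof.F_zero, NCProof.ev_one hD] at hc0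
  rw [NCProof.F_one] at hc1
  have hinv : ∀ x : ℝ, ((1 : Matrix (Fin t) (Fin t) ℝ) - x • D + B * D)⁻¹ =
      ∑ n ∈ Finset.range t, x ^ n • ((Ci * D) ^ n * Ci) := by
    intro x
    apply Matrix.inv_eq_left_inv
    have e : (1 : Matrix (Fin t) (Fin t) ℝ) - x • D + B * D = (1 + B * D) - x • D := by abel
    have e2 : Ci * ((1 : Matrix (Fin t) (Fin t) ℝ) - x • D + B * D) = 1 - x • (Ci * D) := by
      rw [e, mul_sub, hC1, mul_smul_comm]
    have e3 : ∑ n ∈ Finset.range t, x ^ n • ((Ci * D) ^ n * Ci) =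
        (∑ n ∈ Finset.range t, (x • (Ci * D)) ^ n) * Ci := by
      rw [Finset.sum_mul]
      refine Finset.sum_congr rfl fun n _ => ?_
      rw [smul_pow, smul_mul_assoc]
    rw [e3, mul_assoc, e2, geom_sum_mul_neg, smul_pow, hW, smul_zero, sub_zero]
  have hfun : ∀ x : ℝ, (((1 : Matrix (Fin t) (Fin t) ℝ) - x • D + B * D)⁻¹ *
      (x • (1 : Matrix (Fin t) (Fin t) ℝ) - B)) i j =
      ∑ n ∈ Finset.range t, (x ^ (n + 1) * ((Ci * D) ^ n * Ci) i j -
        x ^ n * ((Ci * D) ^ n * Ci * B) i j) := by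
    intro x
    rw [hinv, Finset.sum_mul, Matrix.sum_apply]
    refine Finset.sum_congr rfl fun n _ => ?_
    rw [mul_sub, mul_smul_comm, mul_one, smul_smul, ← pow_succ', smul_mul_assoc]
    simp
  simp_rw [hfun]
  rw [integral_finsetSum]
  swap
  · intro n _
    exact ((hpow (n + 1)).mul_const _).sub ((hpow n).mul_const _)
  have hterm : ∀ n, (∫ x, (x ^ (n + 1) * ((Ci * D) ^ n * Ci) i j -
        x ^ n * ((Ci * D) ^ n * Ci * B) i j) ∂μ) =
      (NCProof.f κ (n + 1) 0 • ((Ci * D) ^ n * Ci) -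
        (NCProof.f κ (n + 0) 0 • ((Ci * D) ^ n * Ci)) * B) i j := by
    intro n
    rw [integral_sub ((hpow (n + 1)).mul_const _) ((hpow n).mul_const _),
      integral_mul_const, integral_mul_const, hm, hm, smul_mul_assoc]
    simp
  rw [Finset.sum_congr rfl fun n _ => hterm n, ← Matrix.sum_apply, Finset.sum_sub_distrib,
    ← Finset.sum_mul, hc0, hc1, one_mul, ← hB, sub_self]
  rfl
end

section
/- Let μ be a compactly supported Borel probability measure on ℝ and let (Q_n)_{n≥0}, (q_n)_{n≥0} be defined from μ as in the context. Then for all integers I, J ≥ 1, ∫ Q_I(λ)·Q_J(λ) dμ(λ) = Σ_{m=1}^{I} Σ_{n=1}^{J} (∫ Q_{I−m}(λ)·Q_{J−n}(λ) dμ(λ)) · q_{m+n}. -/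
open MeasureTheory

theorem aux_int (μ : Measure ℝ) [IsProbabilityMeasure μ]
    (K : Set ℝ) (hK : IsCompact K) (hKc : μ Kᶜ = 0) (P : Polynomial ℝ) :
    Integrable (fun x => P.eval x) μ := by
  have h : IntegrableOn (fun x => P.eval x) K μ :=
    P.continuous.continuousOn.integrableOn_compact hK
  have h2 : μ.restrict K = μ := by
    apply Measure.restrict_eq_self_of_ae_mem
    exact hKc
  rwa [IntegrableOn, h2] at h

theorem aux_alg (L : Polynomial ℝ →ₗ[ℝ] ℝ) (Q : ℕ → Polynomial ℝ) (q : ℕ → ℝ)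
    (hL1 : L 1 = 1) (hQ0 : Q 0 = 1)
    (hq : ∀ n, q (n + 1) = L (Polynomial.X * Q n))
    (hQ : ∀ n, Q (n + 1) = Polynomial.X * Q n -
      ∑ i ∈ Finset.range (n + 1), (q (i + 1)) • Q (n - i)) (I : ℕ) :
    ∀ J, 1 ≤ I + J → L (Q I * Q J) = ∑ m ∈ Finset.range I, ∑ n ∈ Finset.range J,
      L (Q (I - (m + 1)) * Q (J - (n + 1))) * q (m + n + 2) := by
  have hz : ∀ n, L (Q (n + 1)) = 0 := by
    intro n
    induction n using Nat.strong_induction_on with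
    | _ n ih =>
      rw [hQ, map_sub, ← hq, map_sum, Finset.sum_range_succ, Finset.sum_eq_zero]
      · simp [hQ0, hL1]
      · intro i hi
        have hi := Finset.mem_range.1 hi
        have : n - i = (n - i - 1) + 1 := by omega
        rw [map_smul, this, ih _ (by omega), smul_zero]
  have hr : ∀ I J, L (Q (I + 1) * Q J) = L (Polynomial.X * Q I * Q J) -
      ((∑ i ∈ Finset.range I, L (Q (I - (i + 1)) * Q J) * q (i + 2)) +
        q 1 * L (Q I * Q J)) := by
    intro I J
    rw [hQ, sub_mul, map_sub, Finset.sum_mul, map_sum, Finset.sum_range_succ']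
    simp only [smul_mul_assoc, map_smul, smul_eq_mul, Nat.sub_zero, zero_add]
    congr 2
    exact Finset.sum_congr rfl fun i _ => mul_comm _ _
  induction I with
  | zero =>
    intro J hJ
    obtain ⟨k, rfl⟩ : ∃ k, J = k + 1 := ⟨J - 1, by omega⟩
    simp [hQ0, hz]
  | succ I ih =>
    intro J _
    have h := ih (J + 1) (by omega)
    have h1 := hr I J
    have h2 := hr J I
    have e1 : Polynomial.X * Q J * Q I = Polynomial.X * Q I * Q J := by ring
    rw [e1, mul_comm (Q (J + 1)), mul_comm (Q J)] at h2
    rw [Finset.sum_range_succ']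
    simp only [Finset.sum_range_succ' _ J, Finset.sum_add_distrib] at h
    simp only [Nat.add_sub_add_right, Nat.add_sub_cancel, zero_add, add_zero] at h ⊢
    have e2 : ∀ m n, m + (n + 1) + 2 = m + 1 + n + 2 := by intros; omega
    simp only [e2] at h
    have e3 : ∑ i ∈ Finset.range J, L (Q (J - (i + 1)) * Q I) * q (i + 2) =
      ∑ i ∈ Finset.range J, L (Q I * Q (J - (i + 1))) * q (i + 2) :=
      Finset.sum_congr rfl fun i _ => by rw [mul_comm (Q I)]
    rw [e3] at h2
    linarith

theorem stmt11 (μ : Measure ℝ) [IsProbabilityMeasure μ]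
    (K : Set ℝ) (hK : IsCompact K) (hKc : μ Kᶜ = 0)
    (Q : ℕ → Polynomial ℝ) (q : ℕ → ℝ)
    (hQ0 : Q 0 = 1) (hq0 : q 0 = 1)
    (hq : ∀ n : ℕ, 1 ≤ n → q n = ∫ x, x * (Q (n - 1)).eval x ∂μ)
    (hQrec : ∀ n : ℕ, 1 ≤ n →
      Q n = Polynomial.X * Q (n - 1) - ∑ i ∈ Finset.Icc 1 n, Polynomial.C (q i) * Q (n - i)) :
    ∀ I J : ℕ, 1 ≤ I → 1 ≤ J →
      (∫ x, (Q I).eval x * (Q J).eval x ∂μ) =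
        ∑ m ∈ Finset.Icc 1 I, ∑ n ∈ Finset.Icc 1 J,
          (∫ x, (Q (I - m)).eval x * (Q (J - n)).eval x ∂μ) * q (m + n) := by
  have hi := aux_int μ K hK hKc
  let L : Polynomial ℝ →ₗ[ℝ] ℝ :=
    { toFun := fun P => ∫ x, P.eval x ∂μ
      map_add' := fun P R => by
        simp only [Polynomial.eval_add]
        exact integral_add (hi P) (hi R)
      map_smul' := fun c P => by
        simp only [Polynomial.eval_smul, smul_eq_mul, RingHom.id_apply]
        exact integral_const_mul _ _ }
  have hL : ∀ P, L P = ∫ x, P.eval x ∂μ := fun _ => rfl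
  have hs : ∀ (f : ℕ → ℝ) n, ∑ i ∈ Finset.Icc 1 n, f i = ∑ i ∈ Finset.range n, f (i + 1) := by
    intro f n
    rw [Finset.range_eq_Ico, Finset.sum_Ico_add' f 0 n 1]
    rfl
  have hs' : ∀ (f : ℕ → Polynomial ℝ) n,
      ∑ i ∈ Finset.Icc 1 n, f i = ∑ i ∈ Finset.range n, f (i + 1) := by
    intro f n
    rw [Finset.range_eq_Ico, Finset.sum_Ico_add' f 0 n 1]
    rfl
  intro I J hI hJ
  have := aux_alg L Q q (by simp [hL]) hQ0
    (fun n => by rw [hq (n + 1) (by omega), hL]; simp)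
    (fun n => by
      rw [hQrec (n + 1) (by omega), hs']
      simp [Polynomial.smul_eq_C_mul]) I J (by omega)
  simp only [hL, Polynomial.eval_mul] at this
  rw [this]
  simp only [hs]
  refine Finset.sum_congr rfl fun m _ => Finset.sum_congr rfl fun n _ => ?_
  congr 2
  omega
end

section
/- Let μ be a compactly supported Borel probability measure on ℝ and let (Q_n)_{n≥0}, (q_n)_{n≥0} be defined from μ as in the context. Then for all integers I, J ≥ 1 the polynomial identity Q_I · Q_J = Q_{I+J} + Σ_{k=1}^{I} Σ_{j=1}^{J} q_{k+j} · Q_{I−k} · Q_{J−j} holds in ℝ[λ]. -/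
open MeasureTheory

/-- Purely algebraic core of the identity, with sums over ranges. -/
theorem core_identity {R : Type*} [CommRing R] (x : R) (Q q : ℕ → R) (hQ0 : Q 0 = 1)
    (hrec : ∀ n : ℕ, Q (n + 1) = x * Q n - ∑ i ∈ Finset.range (n + 1), q (i + 1) * Q (n - i)) :
    ∀ I J : ℕ, Q I * Q J = Q (I + J) + ∑ k ∈ Finset.range I, ∑ j ∈ Finset.range J,
      q (k + j + 2) * (Q (I - (k + 1)) * Q (J - (j + 1))) := by
  have key : ∀ n : ℕ, ∑ i ∈ Finset.range n, q (i + 2) * Q (n - (i + 1))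
      = x * Q n - Q (n + 1) - q 1 * Q n := by
    intro n
    rw [hrec n, Finset.sum_range_succ']
    simp only [Nat.sub_zero, zero_add, add_assoc, Nat.reduceAdd]
    ring
  intro I
  induction I with
  | zero => intro J; simp [hQ0]
  | succ I ih =>
    intro J
    have h := ih (J + 1)
    have e1 : ∑ k ∈ Finset.range (I + 1), ∑ j ∈ Finset.range J,
        q (k + j + 2) * (Q (I + 1 - (k + 1)) * Q (J - (j + 1)))
        = ∑ k ∈ Finset.range I, ∑ j ∈ Finset.range J,
            q (k + j + 3) * (Q (I - (k + 1)) * Q (J - (j + 1)))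
          + Q I * (x * Q J - Q (J + 1) - q 1 * Q J) := by
      rw [Finset.sum_range_succ', ← key J, Finset.mul_sum]
      congr 1
      · refine Finset.sum_congr rfl fun k _ => Finset.sum_congr rfl fun j _ => ?_
        rw [show k + 1 + j + 2 = k + j + 3 by ring, Nat.add_sub_add_right]
      · refine Finset.sum_congr rfl fun j _ => ?_
        simp only [zero_add, Nat.add_sub_cancel]
        ring
    have e2 : ∑ k ∈ Finset.range I, ∑ j ∈ Finset.range (J + 1),
        q (k + j + 2) * (Q (I - (k + 1)) * Q (J + 1 - (j + 1)))
        = ∑ k ∈ Finset.range I, ∑ j ∈ Finset.range J,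
            q (k + j + 3) * (Q (I - (k + 1)) * Q (J - (j + 1)))
          + Q J * (x * Q I - Q (I + 1) - q 1 * Q I) := by
      rw [← key I, Finset.mul_sum, ← Finset.sum_add_distrib]
      refine Finset.sum_congr rfl fun k _ => ?_
      rw [Finset.sum_range_succ']
      congr 1
      · refine Finset.sum_congr rfl fun j _ => ?_
        rw [show k + (j + 1) + 2 = k + j + 3 by ring, Nat.add_sub_add_right]
      · simp only [zero_add, add_zero, Nat.add_sub_cancel]
        ring
    rw [e2] at h
    rw [e1, show I + 1 + J = I + (J + 1) by ring]
    linear_combination h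

theorem sum_Icc_one_eq {R : Type*} [CommRing R] (n : ℕ) (f : ℕ → R) :
    ∑ i ∈ Finset.Icc 1 n, f i = ∑ i ∈ Finset.range n, f (i + 1) := by
  induction n with
  | zero => simp
  | succ n ih => rw [Finset.sum_Icc_succ_top (by omega), ih, Finset.sum_range_succ]

theorem core_identity_Icc {R : Type*} [CommRing R] (x : R) (Q q : ℕ → R) (hQ0 : Q 0 = 1)
    (hQrec : ∀ n : ℕ, 1 ≤ n → Q n = x * Q (n - 1) - ∑ i ∈ Finset.Icc 1 n, q i * Q (n - i))
    (I J : ℕ) : Q I * Q J = Q (I + J) + ∑ k ∈ Finset.Icc 1 I, ∑ j ∈ Finset.Icc 1 J,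
      q (k + j) * (Q (I - k) * Q (J - j)) := by
  have hrec : ∀ n : ℕ, Q (n + 1) = x * Q n
      - ∑ i ∈ Finset.range (n + 1), q (i + 1) * Q (n - i) := by
    intro n
    have h := hQrec (n + 1) (by omega)
    rw [sum_Icc_one_eq] at h
    simpa only [Nat.add_sub_cancel, Nat.add_sub_add_right] using h
  rw [core_identity x Q q hQ0 hrec I J, sum_Icc_one_eq]
  congr 1
  refine Finset.sum_congr rfl fun k _ => ?_
  rw [sum_Icc_one_eq]
  refine Finset.sum_congr rfl fun j _ => ?_
  rw [show k + 1 + (j + 1) = k + j + 2 by ring]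

theorem stmt12 (μ : Measure ℝ) [IsProbabilityMeasure μ]
    (K : Set ℝ) (hK : IsCompact K) (hKc : μ Kᶜ = 0)
    (Q : ℕ → Polynomial ℝ) (q : ℕ → ℝ)
    (hQ0 : Q 0 = 1) (hq0 : q 0 = 1)
    (hq : ∀ n : ℕ, 1 ≤ n → q n = ∫ x, x * (Q (n - 1)).eval x ∂μ)
    (hQrec : ∀ n : ℕ, 1 ≤ n →
      Q n = Polynomial.X * Q (n - 1) - ∑ i ∈ Finset.Icc 1 n, Polynomial.C (q i) * Q (n - i)) :
    ∀ I J : ℕ, 1 ≤ I → 1 ≤ J →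
      Q I * Q J =
        Q (I + J) + ∑ k ∈ Finset.Icc 1 I, ∑ j ∈ Finset.Icc 1 J,
          Polynomial.C (q (k + j)) * (Q (I - k) * Q (J - j)) := by
  intro I J _ _
  exact core_identity_Icc Polynomial.X Q (fun n => Polynomial.C (q n)) hQ0 hQrec I J
end

section
/- Let μ be a compactly supported Borel probability measure on ℝ and let (H_n)_{n≥0}, (γ_n)_{n≥1} be defined from μ as in the context. Fix t ≥ 1, let Φ ∈ ℝ^{t×t} be strictly lower triangular, and set C := Σ_{i=1}^{t} γ_i·Φ^{i−1} (with Φ^0 := I_t). Then: (a) for every λ ∈ ℝ, the matrix I_t − λ·Φ is invertible and (I_t − λ·Φ)^{−1}·(λ·I_t − C) = Σ_{i=1}^{t} H_i(λ)·Φ^{i−1}; (b) ∫ H_n(λ) dμ(λ) = 0 for every n ≥ 1, so that ∫ (I_t − λ·Φ)^{−1}·(λ·I_t − C) dμ(λ) = 0 entrywise. -/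
open MeasureTheory

theorem stmt15 (μ : Measure ℝ) [IsProbabilityMeasure μ]
    (K : Set ℝ) (hK : IsCompact K) (hKc : μ Kᶜ = 0)
    (H : ℕ → Polynomial ℝ) (γ : ℕ → ℝ)
    (hH0 : H 0 = 1)
    (hγ : ∀ n : ℕ, 1 ≤ n → γ n = ∫ x, x * (H (n - 1)).eval x ∂μ)
    (hHrec : ∀ n : ℕ, 1 ≤ n → H n = Polynomial.X * H (n - 1) - Polynomial.C (γ n))
    (t : ℕ) (ht : 1 ≤ t)
    (Φ : Matrix (Fin t) (Fin t) ℝ)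
    (hΦ : ∀ i j : Fin t, i ≤ j → Φ i j = 0)
    (Cm : Matrix (Fin t) (Fin t) ℝ)
    (hCm : Cm = ∑ i ∈ Finset.range t, γ (i + 1) • Φ ^ i) :
    (∀ x : ℝ,
        IsUnit ((1 : Matrix (Fin t) (Fin t) ℝ) - x • Φ) ∧
        ((1 : Matrix (Fin t) (Fin t) ℝ) - x • Φ)⁻¹ *
            (x • (1 : Matrix (Fin t) (Fin t) ℝ) - Cm) =
          ∑ i ∈ Finset.range t, (H (i + 1)).eval x • Φ ^ i) ∧
    (∀ n : ℕ, 1 ≤ n → (∫ x, (H n).eval x ∂μ) = 0) ∧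
    (∀ i j : Fin t,
        (∫ x, (((1 : Matrix (Fin t) (Fin t) ℝ) - x • Φ)⁻¹ *
            (x • (1 : Matrix (Fin t) (Fin t) ℝ) - Cm)) i j ∂μ) = 0) := by
  have hpow : ∀ k : ℕ, ∀ i j : Fin t, (i : ℕ) < j + k → (Φ ^ k) i j = 0 := by
    intro k
    induction k with
    | zero =>
      intro i j h
      rw [pow_zero, Matrix.one_apply_ne]
      rintro rfl
      omega
    | succ k ih =>
      intro i j h
      rw [pow_succ, Matrix.mul_apply]
      refine Finset.sum_eq_zero fun l _ => ?_
      by_cases hl : l ≤ j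
      · rw [hΦ l j hl, mul_zero]
      · have : (j : ℕ) < l := not_le.mp hl
        rw [ih i l (by omega), zero_mul]
  have hnil : Φ ^ t = 0 := by
    ext i j
    exact hpow t i j (by omega)
  have hunit : ∀ x : ℝ, IsUnit ((1 : Matrix (Fin t) (Fin t) ℝ) - x • Φ) := by
    intro x
    apply IsNilpotent.isUnit_one_sub
    exact ⟨t, by rw [smul_pow, hnil, smul_zero]⟩
  have hkey : ∀ x : ℝ, ∀ m : ℕ, ((1 : Matrix (Fin t) (Fin t) ℝ) - x • Φ) *
      (∑ i ∈ Finset.range m, (H (i + 1)).eval x • Φ ^ i) =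
      x • (1 : Matrix (Fin t) (Fin t) ℝ) - (∑ i ∈ Finset.range m, γ (i + 1) • Φ ^ i)
        - (x * (H m).eval x) • Φ ^ m := by
    intro x m
    induction m with
    | zero => simp [hH0]
    | succ m ih =>
      have h1 : (H (m + 1)).eval x = x * (H m).eval x - γ (m + 1) := by
        rw [hHrec (m + 1) (by omega)]; simp
      have h2 : ((1 : Matrix (Fin t) (Fin t) ℝ) - x • Φ) * ((H (m + 1)).eval x • Φ ^ m) =
          (x * (H m).eval x) • Φ ^ m - γ (m + 1) • Φ ^ m
            - (x * (H (m + 1)).eval x) • Φ ^ (m + 1) := by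
        rw [← sub_smul, ← h1, sub_mul, one_mul, smul_mul_smul_comm, ← pow_succ']
      rw [Finset.sum_range_succ, Finset.sum_range_succ, mul_add, ih, h2]
      abel
  have hA : ∀ x : ℝ, ((1 : Matrix (Fin t) (Fin t) ℝ) - x • Φ)⁻¹ *
            (x • (1 : Matrix (Fin t) (Fin t) ℝ) - Cm) =
          ∑ i ∈ Finset.range t, (H (i + 1)).eval x • Φ ^ i := by
    intro x
    have h := hkey x t
    rw [hnil, smul_zero, sub_zero, ← hCm] at h
    rw [← h, Matrix.nonsing_inv_mul_cancel_left _ _ ((Matrix.isUnit_iff_isUnit_det _).mp (hunit x))]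
  have hint : ∀ p : Polynomial ℝ, Integrable (fun x => p.eval x) μ := by
    intro p
    have h : IntegrableOn (fun x => p.eval x) K μ :=
      p.continuous.continuousOn.integrableOn_compact hK
    have hr : μ.restrict K = μ := Measure.restrict_eq_self_of_ae_mem (by
      rw [ae_iff]; exact hKc)
    rwa [IntegrableOn, hr] at h
  have hB : ∀ n : ℕ, 1 ≤ n → (∫ x, (H n).eval x ∂μ) = 0 := by
    intro n hn
    have h1 : ∀ x, (H n).eval x = x * (H (n - 1)).eval x - γ n := by
      intro x
      conv_lhs => rw [hHrec n hn]
      simp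
    have hi : Integrable (fun x => x * (H (n - 1)).eval x) μ := by
      have h := hint (Polynomial.X * H (n - 1))
      simp only [Polynomial.eval_mul, Polynomial.eval_X] at h
      exact h
    simp_rw [h1]
    rw [integral_sub hi (integrable_const _), ← hγ n hn]
    simp
  refine ⟨fun x => ⟨hunit x, hA x⟩, hB, fun i j => ?_⟩
  simp_rw [hA, Matrix.sum_apply, Matrix.smul_apply, smul_eq_mul]
  rw [integral_finsetSum _ fun k _ => (hint _).mul_const _]
  refine Finset.sum_eq_zero fun k _ => ?_
  rw [integral_mul_const, hB _ (by omega), zero_mul]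
end

section
/- Let μ be a compactly supported Borel probability measure on ℝ and let (H_n)_{n≥0}, (γ_n)_{n≥1} be defined from μ as in the context. Fix integers N ≥ 1 and t ≥ 1. Let W be an arbitrary real N×N matrix, let (d_{s,i})_{1≤i≤s≤t−1} be real numbers, and let Φ ∈ ℝ^{t×t} be the strictly lower triangular matrix with entries Φ_{s,i} = d_{s−1,i} for i < s. Set C := Σ_{i=1}^{t} γ_i·Φ^{i−1} (with Φ^0 := I_t), with entries c_{s,i} := C_{s,i}. Let u_1 = ū_1 ∈ ℝ^N, and for 1 ≤ s ≤ t define r_s := W·u_s − Σ_{i=1}^{s} c_{s,i}·ū_i, and for 1 ≤ s ≤ t−1 let u_{s+1} ∈ ℝ^N be arbitrary and set ū_{s+1} := u_{s+1} − Σ_{i=1}^{s} d_{s,i}·r_i. Then for every 1 ≤ s ≤ t, r_s = Σ_{i=1}^{s} G_{s,i}(W)·ū_i, where G_{s,i}(λ) denotes the (s,i) entry of the matrix Σ_{j=1}^{t} H_j(λ)·Φ^{j−1} and G_{s,i}(W) its evaluation at the matrix W. -/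
open MeasureTheory

theorem aux_pow_zero {t : ℕ} (Φ : Matrix (Fin t) (Fin t) ℝ)
    (hΦ : ∀ i j : Fin t, i ≤ j → Φ i j = 0) (n : ℕ) :
    ∀ s i : Fin t, s.val < i.val + n → (Φ ^ n) s i = 0 := by
  induction n with
  | zero =>
    intro s i h
    rw [pow_zero, Matrix.one_apply_ne]
    rintro rfl
    omega
  | succ n ih =>
    intro s i h
    rw [pow_succ, Matrix.mul_apply]
    refine Finset.sum_eq_zero fun k _ => ?_
    by_cases hk : k ≤ i
    · rw [hΦ k i hk, mul_zero]
    · rw [ih s k (by have : i.val < k.val := not_le.mp hk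
                     omega), zero_mul]

theorem stmt17 (μ : Measure ℝ) [IsProbabilityMeasure μ]
    (K : Set ℝ) (hK : IsCompact K) (hKc : μ Kᶜ = 0)
    (H : ℕ → Polynomial ℝ) (γ : ℕ → ℝ)
    (hH0 : H 0 = 1)
    (hγ : ∀ n : ℕ, 1 ≤ n → γ n = ∫ x, x * (H (n - 1)).eval x ∂μ)
    (hHrec : ∀ n : ℕ, 1 ≤ n → H n = Polynomial.X * H (n - 1) - Polynomial.C (γ n))
    (N t : ℕ) (hN : 1 ≤ N) (ht : 1 ≤ t)
    (W : Matrix (Fin N) (Fin N) ℝ)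
    (Φ : Matrix (Fin t) (Fin t) ℝ)
    (hΦ : ∀ i j : Fin t, i ≤ j → Φ i j = 0)
    (Cm : Matrix (Fin t) (Fin t) ℝ)
    (hCm : Cm = ∑ i ∈ Finset.range t, γ (i + 1) • Φ ^ i)
    (u r ubar : Fin t → Fin N → ℝ)
    (hr : ∀ s : Fin t,
      r s = W.mulVec (u s) - ∑ i ∈ Finset.univ.filter (fun i => i ≤ s), Cm s i • ubar i)
    (hubar : ∀ s : Fin t,
      ubar s = u s - ∑ i ∈ Finset.univ.filter (fun i => i < s), Φ s i • r i) :
    ∀ s : Fin t,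
      r s = ∑ i ∈ Finset.univ.filter (fun i => i ≤ s),
        (Polynomial.aeval W
          ((∑ j ∈ Finset.range t, H (j + 1) • (Φ ^ j).map Polynomial.C) s i)).mulVec (ubar i) := by
  have hpz := aux_pow_zero Φ hΦ
  have hPt : Φ ^ t = 0 := by
    ext s i
    exact hpz t s i (by omega)
  set P : Matrix (Fin t) (Fin t) (Polynomial ℝ) :=
    ∑ j ∈ Finset.range t, H (j + 1) • (Φ ^ j).map Polynomial.C with hP
  have hPapp : ∀ s i, P s i = ∑ j ∈ Finset.range t, H (j + 1) * Polynomial.C ((Φ ^ j) s i) := by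
    intro s i
    simp [hP, Matrix.sum_apply]
  have hPup : ∀ s i, s < i → P s i = 0 := by
    intro s i h
    rw [hPapp]
    refine Finset.sum_eq_zero fun j _ => ?_
    rw [hpz j s i (by have : s.val < i.val := h
                      omega)]
    simp
  have hCapp : ∀ s i, Cm s i = ∑ j ∈ Finset.range t, γ (j + 1) * (Φ ^ j) s i := by
    intro s i
    simp [hCm, Matrix.sum_apply]
  have hCup : ∀ s i, s < i → Cm s i = 0 := by
    intro s i h
    rw [hCapp]
    refine Finset.sum_eq_zero fun j _ => ?_
    rw [hpz j s i (by have : s.val < i.val := h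
                      omega)]
    simp
  have hrec : ∀ s i, P s i = Polynomial.X * Polynomial.C ((1 : Matrix (Fin t) (Fin t) ℝ) s i)
      + (∑ k, Polynomial.C (Φ s k) * (Polynomial.X * P k i)) - Polynomial.C (Cm s i) := by
    intro s i
    have h1 : ∑ k, Polynomial.C (Φ s k) * (Polynomial.X * P k i)
        = ∑ j ∈ Finset.range t,
          Polynomial.X * (H (j + 1) * Polynomial.C ((Φ ^ (j + 1)) s i)) := by
      simp only [hPapp, Finset.mul_sum]
      rw [Finset.sum_comm]
      refine Finset.sum_congr rfl fun j _ => ?_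
      rw [pow_succ', Matrix.mul_apply, map_sum, Finset.mul_sum, Finset.mul_sum]
      refine Finset.sum_congr rfl fun k _ => ?_
      rw [Polynomial.C_mul]
      ring
    have h2 := Finset.sum_range_succ
      (fun j => Polynomial.X * (H j * Polynomial.C ((Φ ^ j) s i))) t
    rw [Finset.sum_range_succ', hPt, hH0, pow_zero] at h2
    simp only [Matrix.zero_apply, Polynomial.C_0, mul_zero, add_zero, one_mul] at h2
    rw [h1, add_comm (Polynomial.X * _), h2, hPapp, hCapp, map_sum, ← Finset.sum_sub_distrib]
    refine Finset.sum_congr rfl fun j _ => ?_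
    rw [hHrec (j + 1) (by omega), Nat.add_sub_cancel, Polynomial.C_mul]
    ring
  have hA : ∀ s i, Polynomial.aeval W (P s i)
      = (1 : Matrix (Fin t) (Fin t) ℝ) s i • W
        + (∑ k, Φ s k • (W * Polynomial.aeval W (P k i))) - Cm s i • 1 := by
    intro s i
    conv_lhs => rw [hrec s i]
    simp only [map_sub, map_add, map_mul, map_sum, Polynomial.aeval_X, Polynomial.aeval_C,
      Algebra.algebraMap_eq_smul_one, smul_mul_assoc, mul_smul_comm, one_mul, mul_one]
  have hfull : ∀ s, (∑ i ∈ Finset.univ.filter (fun i => i ≤ s),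
      (Polynomial.aeval W (P s i)).mulVec (ubar i))
      = ∑ i, (Polynomial.aeval W (P s i)).mulVec (ubar i) := by
    intro s
    refine Finset.sum_subset (Finset.filter_subset _ _) fun i _ hi => ?_
    rw [hPup s i (by simpa using hi)]
    simp
  have hfullC : ∀ s, (∑ i ∈ Finset.univ.filter (fun i => i ≤ s), Cm s i • ubar i)
      = ∑ i, Cm s i • ubar i := by
    intro s
    refine Finset.sum_subset (Finset.filter_subset _ _) fun i _ hi => ?_
    rw [hCup s i (by simpa using hi)]
    simp
  have hfullr : ∀ s, (∑ i ∈ Finset.univ.filter (fun i => i < s), Φ s i • r i)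
      = ∑ i, Φ s i • r i := by
    intro s
    refine Finset.sum_subset (Finset.filter_subset _ _) fun i _ hi => ?_
    rw [hΦ s i (by simpa using hi)]
    simp
  intro s
  rw [hfull]
  induction s using WellFoundedLT.induction with
  | ind s ih =>
    have hu : u s = ubar s + ∑ k, Φ s k • r k := by
      rw [hubar s, hfullr]
      abel
    have hk : ∑ k, Φ s k • r k
        = ∑ k, Φ s k • ∑ i, (Polynomial.aeval W (P k i)).mulVec (ubar i) := by
      refine Finset.sum_congr rfl fun k _ => ?_
      by_cases h : k < s
      · rw [ih k h]
      · rw [hΦ s k (not_lt.mp h), zero_smul, zero_smul]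
    rw [hr s, hfullC, hu, hk]
    have e : ∀ i, (Polynomial.aeval W (P s i)).mulVec (ubar i)
        = (1 : Matrix (Fin t) (Fin t) ℝ) s i • W.mulVec (ubar i)
        + (∑ k, Φ s k • W.mulVec ((Polynomial.aeval W (P k i)).mulVec (ubar i)))
        - Cm s i • ubar i := by
      intro i
      rw [hA s i, Matrix.sub_mulVec, Matrix.add_mulVec, Matrix.sum_mulVec]
      simp only [Matrix.smul_mulVec, Matrix.mulVec_mulVec, Matrix.one_mulVec]
    simp only [e, Finset.sum_sub_distrib, Finset.sum_add_distrib]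
    rw [Finset.sum_comm]
    simp only [Matrix.mulVec_add, Matrix.mulVec_sum, Matrix.mulVec_smul, Matrix.one_apply,
      ite_smul, one_smul, zero_smul, Finset.sum_ite_eq, Finset.mem_univ, if_true,
      Finset.smul_sum]
end
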